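/- arXiv:2203.01328 — 4 statements merged into one kernel-verified Lean document; each statement's English description precedes it below -/
import Mathlib

section
/- Let N > 2 be an integer, Ω ⊂ ℝ^N a nonempty bounded open set with 0 ∈ Ω, let 0 < α < (N−2)/2 and 0 ≤ γ ≤ 1, and set q = (N+γ)/(N+γ−2). Then there exists C = C(N, Ω, α, γ) > 0 such that for every finite positive Borel measure ω on Ω ∖ {0} and every λ > 0: ∫_{{x ∈ Ω∖{0} : U(x) > λ}} d(x)|x|^{−α} dx ≤ C λ^{−q} ω(Ω∖{0})^q, where U(x) = ∫_{Ω∖{0}} |x−y|^{2−N} · min{1, d(x)d(y)/|x−y|^2} · ( min{1, |x||y|/|x−y|^2} )^{−α} · |y|^{α} d(y)^{−γ} dω(y). -/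
open MeasureTheory Metric Set

/-!
Write `d` for the distance to `∂Ω`, `n` for the dimension and `p = min (|x - y|) |x|`. On a bounded
`Ω` the kernel `K x y` of the potential satisfies `K x y ≤ B p^{2-n-γ}` and
`d(x) |x|^{-α} K x y ≤ B p^{2-n}`. On `{K(·, y) > τ}` the first bound confines `x` to balls of
radius `ρ = (B/τ)^{1/(n+γ-2)}` around the poles `y` and `0`, and the second one bounds the weight
by `(B/τ) p^{2-n}`, whose integral over these balls is of order `(B/τ) ρ² = (B/τ)^q`. Thus the
`K(·, y)` are uniformly in weak `L^q` of the weighted volume. Since `q > 1`, weak `L^q` is stable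
under superposition, so the same holds for `∫ K(·, y) dω(y)`.
-/

open Module (finrank)

section WeakType

variable {X Y : Type*} [MeasurableSpace X] [MeasurableSpace Y] {μ : Measure X} {ν : Measure Y}
  {q A s t : ℝ}

lemma lintegral_Ioi_add_rpow_neg (hq : 1 < q) (hs : 0 < s) :
    ∫⁻ τ in Ioi 0, ENNReal.ofReal ((τ + s) ^ (-q)) = ENNReal.ofReal (s ^ (1 - q) / (q - 1)) := by
  have hint : IntegrableOn (fun τ : ℝ ↦ (τ + s) ^ (-q)) (Ioi 0) :=
    integrableOn_add_rpow_Ioi_of_lt (by linarith) (by linarith)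
  have hnonneg : 0 ≤ᵐ[volume.restrict (Ioi 0)] fun τ : ℝ ↦ (τ + s) ^ (-q) :=
    ae_restrict_of_forall_mem measurableSet_Ioi fun τ (hτ : 0 < τ) ↦ by positivity
  have htranslate : ∫ τ in Ioi 0, (τ + s) ^ (-q) = ∫ τ in Ioi s, τ ^ (-q) := by
    simpa using (measurePreserving_add_right volume s).setIntegral_preimage_emb
      (measurableEmbedding_addRight s) (· ^ (-q)) (Ioi s)
  rw [← ofReal_integral_eq_lintegral_ofReal hint hnonneg, htranslate,
    integral_Ioi_rpow_of_lt (by linarith) hs, neg_add_eq_sub, ← neg_sub q 1, neg_div_neg_eq]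

lemma lintegral_ofReal_sub_le_of_weak_type {f : X → ℝ} (hf : Measurable f) (hq : 1 < q)
    (hA : 0 ≤ A) (hweak : ∀ τ > 0, μ {x | τ < f x} ≤ ENNReal.ofReal (A * τ ^ (-q))) (hs : 0 < s) :
    ∫⁻ x, ENNReal.ofReal (f x - s) ∂μ ≤ ENNReal.ofReal (A * (s ^ (1 - q) / (q - 1))) := by
  calc ∫⁻ x, ENNReal.ofReal (f x - s) ∂μ
      = ∫⁻ x, ENNReal.ofReal (max (f x - s) 0) ∂μ := by simp
    _ = ∫⁻ τ in Ioi 0, μ {x | τ < max (f x - s) 0} :=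
        lintegral_eq_lintegral_meas_lt μ (ae_of_all _ fun _ ↦ le_max_right _ _) (by fun_prop)
    _ ≤ ∫⁻ τ in Ioi 0, ENNReal.ofReal A * ENNReal.ofReal ((τ + s) ^ (-q)) := by
        refine setLIntegral_mono (by fun_prop) fun τ (hτ : 0 < τ) ↦ ?_
        rw [← ENNReal.ofReal_mul hA]
        refine (measure_mono fun x hx ↦ ?_).trans (hweak (τ + s) (by positivity))
        exact lt_sub_iff_add_lt.1 ((lt_max_iff.1 hx).resolve_right hτ.not_gt)
    _ = ENNReal.ofReal (A * (s ^ (1 - q) / (q - 1))) := by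
        rw [lintegral_const_mul' _ _ ENNReal.ofReal_ne_top, lintegral_Ioi_add_rpow_neg hq hs,
          ← ENNReal.ofReal_mul hA]

lemma lintegral_ofReal_le_add_lintegral_ofReal_sub {f : Y → ℝ} (hf : Measurable f) :
    ∫⁻ y, ENNReal.ofReal (f y) ∂ν ≤
      ENNReal.ofReal s * ν univ + ∫⁻ y, ENNReal.ofReal (f y - s) ∂ν := by
  rw [← lintegral_const, ← lintegral_add_right _ (by fun_prop)]
  refine lintegral_mono fun y ↦ ?_
  simpa using ENNReal.ofReal_add_le (p := s) (q := f y - s)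

lemma weak_type_constant_eq {W : ℝ} (hW : 0 < W) (ht : 0 < t) (hq : 1 < q) :
    A * ((t / (2 * W)) ^ (1 - q) / (q - 1)) * W / (t / 2) =
      2 ^ q / (q - 1) * A * t ^ (-q) * W ^ q := by
  have hbase : (t / (2 * W)) ^ (1 - q) = t / (2 * W) * (t ^ (-q) * (2 ^ q * W ^ q)) := by
    rw [sub_eq_add_neg, Real.rpow_add (by positivity), Real.rpow_one,
      Real.div_rpow ht.le (by positivity), Real.rpow_neg (by positivity : 0 ≤ 2 * W),
      div_inv_eq_mul, Real.mul_rpow two_pos.le hW.le]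
  have hq1 : q - 1 ≠ 0 := by linarith
  rw [hbase]
  field_simp

/-- Truncating the kernel at height `s = t / (2 ν(Y))` costs at most `t / 2` in the potential; the
part above `s` has finite `L¹` norm because `q > 1`, so Chebyshev's inequality applies to it. -/
theorem measure_lt_lintegral_kernel_le_of_weak_type [SFinite μ] [IsFiniteMeasure ν]
    {K : X → Y → ℝ} (hK : Measurable (Function.uncurry K)) (hq : 1 < q) (hA : 0 ≤ A)
    (hweak : ∀ᵐ y ∂ν, ∀ τ > 0, μ {x | τ < K x y} ≤ ENNReal.ofReal (A * τ ^ (-q))) (ht : 0 < t) :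
    μ {x | ENNReal.ofReal t < ∫⁻ y, ENNReal.ofReal (K x y) ∂ν} ≤
      ENNReal.ofReal (2 ^ q / (q - 1) * A * t ^ (-q)) * ν univ ^ q := by
  rcases eq_zero_or_neZero ν with rfl | _
  · simp
  set W := ν.real univ
  have hW : 0 < W := measureReal_univ_pos
  have hνW : ν univ = ENNReal.ofReal W := (ofReal_measureReal (measure_ne_top ν univ)).symm
  set s := t / (2 * W) with hs_def
  have hs : 0 < s := by positivity
  let excess (x : X) (y : Y) : ENNReal := ENNReal.ofReal (K x y - s)
  have hexcess : Measurable (Function.uncurry excess) := (hK.sub_const s).ennreal_ofReal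
  have hsplit (x : X) (hx : ENNReal.ofReal t < ∫⁻ y, ENNReal.ofReal (K x y) ∂ν) :
      ENNReal.ofReal (t / 2) ≤ ∫⁻ y, excess x y ∂ν := by
    have hlt := hx.trans_le
      (lintegral_ofReal_le_add_lintegral_ofReal_sub (s := s) hK.of_uncurry_left)
    have hsW : s * W = t / 2 := by rw [hs_def]; field_simp
    rw [hνW, ← ENNReal.ofReal_mul hs.le, hsW, ← add_halves t,
      ENNReal.ofReal_add (by positivity) (by positivity), add_halves] at hlt
    exact ((ENNReal.add_lt_add_iff_left ENNReal.ofReal_ne_top).1 hlt).le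
  have htotal : ∫⁻ x, ∫⁻ y, excess x y ∂ν ∂μ ≤
      ENNReal.ofReal (A * (s ^ (1 - q) / (q - 1)) * W) := by
    rw [lintegral_lintegral_swap hexcess.aemeasurable, ENNReal.ofReal_mul' hW.le, ← hνW,
      ← lintegral_const]
    refine lintegral_mono_ae (hweak.mono fun y hy ↦ ?_)
    exact lintegral_ofReal_sub_le_of_weak_type hK.of_uncurry_right hq hA hy hs
  calc μ {x | ENNReal.ofReal t < ∫⁻ y, ENNReal.ofReal (K x y) ∂ν}
      ≤ μ {x | ENNReal.ofReal (t / 2) ≤ ∫⁻ y, excess x y ∂ν} := measure_mono hsplit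
    _ ≤ (∫⁻ x, ∫⁻ y, excess x y ∂ν ∂μ) / ENNReal.ofReal (t / 2) :=
        meas_ge_le_lintegral_div hexcess.lintegral_prod_right'.aemeasurable
          (by simpa using ht) ENNReal.ofReal_ne_top
    _ ≤ ENNReal.ofReal (A * (s ^ (1 - q) / (q - 1)) * W) / ENNReal.ofReal (t / 2) := by gcongr
    _ = ENNReal.ofReal (2 ^ q / (q - 1) * A * t ^ (-q)) * ν univ ^ q := by
        rw [← ENNReal.ofReal_div_of_pos (by positivity), weak_type_constant_eq hW ht hq, hνW,
          ENNReal.ofReal_rpow_of_pos hW, ENNReal.ofReal_mul' (by positivity)]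

end WeakType

section Poles

variable {E : Type*} [NormedAddCommGroup E] [NormedSpace ℝ E] [FiniteDimensional ℝ E]
  [Nontrivial E] [MeasurableSpace E] [BorelSpace E] (μ : Measure E) [μ.IsAddHaarMeasure]
  {e k B τ ρ : ℝ}

lemma setIntegral_ball_norm_rpow (he : -(finrank ℝ E : ℝ) < e) (hρ : 0 ≤ ρ) :
    ∫ x in ball (0 : E) ρ, ‖x‖ ^ e ∂μ =
      finrank ℝ E * μ.real (ball 0 1) / (finrank ℝ E + e) * ρ ^ (finrank ℝ E + e) := by
  have hn : 1 ≤ finrank ℝ E := Module.finrank_pos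
  have hradial : ∀ r ∈ Ioi (0 : ℝ), r ^ (finrank ℝ E - 1) • (Iio ρ).indicator (· ^ e) r =
      (Iio ρ).indicator (· ^ ((finrank ℝ E : ℝ) - 1 + e)) r := by
    intro r (hr : 0 < r)
    by_cases hrρ : r < ρ
    · simp only [indicator_of_mem (mem_Iio.2 hrρ), smul_eq_mul, Real.rpow_add hr]
      rw [← Real.rpow_natCast, Nat.cast_pred hn]
    · simp [hrρ]
  calc ∫ x in ball (0 : E) ρ, ‖x‖ ^ e ∂μ
      = ∫ x : E, (Iio ρ).indicator (· ^ e) ‖x‖ ∂μ := by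
        rw [← integral_indicator measurableSet_ball]
        simp only [indicator, mem_ball_zero_iff, mem_Iio]
    _ = finrank ℝ E * μ.real (ball 0 1) * ∫ r in (0)..ρ, r ^ ((finrank ℝ E : ℝ) - 1 + e) := by
        rw [integral_fun_norm_addHaar, setIntegral_congr_fun measurableSet_Ioi hradial,
          setIntegral_indicator measurableSet_Iio, Ioi_inter_Iio, nsmul_eq_mul, smul_eq_mul,
          ← mul_assoc, ← integral_Ioc_eq_integral_Ioo, ← intervalIntegral.integral_of_le hρ]
    _ = finrank ℝ E * μ.real (ball 0 1) / (finrank ℝ E + e) * ρ ^ (finrank ℝ E + e) := by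
        have hexp : (finrank ℝ E : ℝ) - 1 + e + 1 = finrank ℝ E + e := by ring
        rw [integral_rpow (Or.inl (by linarith)), hexp, Real.zero_rpow (by linarith)]
        ring

lemma setLIntegral_ball_dist_rpow (he : -(finrank ℝ E : ℝ) < e) (z : E) (hρ : 0 ≤ ρ) :
    ∫⁻ x in ball z ρ, ENNReal.ofReal (dist x z ^ e) ∂μ = ENNReal.ofReal
      (finrank ℝ E * μ.real (ball 0 1) / (finrank ℝ E + e) * ρ ^ (finrank ℝ E + e)) := by
  have hint : IntegrableOn (fun x : E ↦ ‖x‖ ^ e) (ball 0 ρ) μ :=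
    integrableOn_ball_of_norm_le_rpow (C := 1) (α := -e) Module.finrank_pos (by linarith)
      (ae_of_all _ fun x ↦ by simp [abs_of_nonneg (Real.rpow_nonneg (norm_nonneg x) e)])
      (measurable_norm.pow_const e).aestronglyMeasurable
  have htranslate : ∫⁻ x in ball z ρ, ENNReal.ofReal (dist x z ^ e) ∂μ =
      ∫⁻ x in ball (0 : E) ρ, ENNReal.ofReal (‖x‖ ^ e) ∂μ := by
    rw [← lintegral_indicator measurableSet_ball, ← lintegral_indicator measurableSet_ball,
      ← lintegral_sub_right_eq_self ((ball 0 ρ).indicator _) z]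
    simp only [indicator, mem_ball, dist_eq_norm, sub_zero]
  rw [htranslate, ← setIntegral_ball_norm_rpow μ he hρ,
    ofReal_integral_eq_lintegral_ofReal hint (ae_of_all _ fun x ↦ by positivity)]

lemma setLIntegral_le_of_pole {S : Set E} {w : E → ℝ} {z : E} (he : -(finrank ℝ E : ℝ) < e)
    (hk : 0 < k) (hB : 0 ≤ B) (hτ : 0 < τ) (hlevel : ∀ x ∈ S, τ < B * dist x z ^ (-k))
    (hweight : ∀ x ∈ S, τ * w x ≤ B * dist x z ^ e) :
    ∫⁻ x in S, ENNReal.ofReal (w x) ∂μ ≤ ENNReal.ofReal (finrank ℝ E * μ.real (ball 0 1) /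
      (finrank ℝ E + e) * (B / τ) ^ (1 + (finrank ℝ E + e) / k)) := by
  have hBτ : 0 ≤ B / τ := by positivity
  have hball : S ⊆ ball z ((B / τ) ^ k⁻¹) := by
    intro x hx
    have hpos : 0 < dist x z := dist_nonneg.lt_of_ne' fun h ↦ by
      have := hlevel x hx
      rw [h, Real.zero_rpow (by linarith), mul_zero] at this
      exact hτ.not_gt this
    rw [mem_ball, Real.lt_rpow_inv_iff_of_pos hpos.le hBτ hk, lt_div_iff₀ hτ,
      ← lt_div_iff₀' (by positivity), div_eq_mul_inv, ← Real.rpow_neg hpos.le]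
    exact hlevel x hx
  calc ∫⁻ x in S, ENNReal.ofReal (w x) ∂μ
      ≤ ∫⁻ x in S, ENNReal.ofReal (B / τ) * ENNReal.ofReal (dist x z ^ e) ∂μ := by
        refine setLIntegral_mono (by fun_prop) fun x hx ↦ ?_
        rw [← ENNReal.ofReal_mul hBτ, div_mul_eq_mul_div]
        exact ENNReal.ofReal_le_ofReal ((le_div_iff₀' hτ).2 (hweight x hx))
    _ ≤ ∫⁻ x in ball z ((B / τ) ^ k⁻¹),
          ENNReal.ofReal (B / τ) * ENNReal.ofReal (dist x z ^ e) ∂μ := lintegral_mono_set hball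
    _ = _ := by
        rw [lintegral_const_mul' _ _ ENNReal.ofReal_ne_top,
          setLIntegral_ball_dist_rpow μ he z (by positivity), ← ENNReal.ofReal_mul hBτ,
          ← Real.rpow_mul hBτ, inv_mul_eq_div, mul_left_comm,
          ← Real.rpow_one_add' hBτ (by have := div_pos (neg_lt_iff_pos_add'.1 he) hk; positivity)]

lemma setLIntegral_le_of_two_poles {S : Set E} {w : E → ℝ} {y z : E}
    (he : -(finrank ℝ E : ℝ) < e) (hk : 0 < k) (hB : 0 ≤ B) (hτ : 0 < τ)
    (hlevel : ∀ x ∈ S, τ < B * min (dist x y) (dist x z) ^ (-k))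
    (hweight : ∀ x ∈ S, τ * w x ≤ B * min (dist x y) (dist x z) ^ e) :
    ∫⁻ x in S, ENNReal.ofReal (w x) ∂μ ≤ 2 * ENNReal.ofReal (finrank ℝ E * μ.real (ball 0 1) /
      (finrank ℝ E + e) * (B / τ) ^ (1 + (finrank ℝ E + e) / k)) := by
  have hcover : S ⊆ {x ∈ S | dist x y ≤ dist x z} ∪ {x ∈ S | dist x z ≤ dist x y} :=
    fun x hx ↦ (le_total (dist x y) (dist x z)).imp (⟨hx, ·⟩) (⟨hx, ·⟩)
  refine ((lintegral_mono_set hcover).trans (lintegral_union_le _ _ _)).trans ?_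
  rw [two_mul]
  refine add_le_add (setLIntegral_le_of_pole μ (z := y) he hk hB hτ ?_ ?_)
    (setLIntegral_le_of_pole μ (z := z) he hk hB hτ ?_ ?_) <;> rintro x ⟨hx, hle⟩
  · simpa only [min_eq_left hle] using hlevel x hx
  · simpa only [min_eq_left hle] using hweight x hx
  · simpa only [min_eq_right hle] using hlevel x hx
  · simpa only [min_eq_right hle] using hweight x hx

end Poles

section KernelFactors

variable {a b r s u e α γ : ℝ}

lemma min_one_mul_max_le (ha : 0 ≤ a) (hb : 0 ≤ b) (hr : 0 < r) (hab : a ≤ b + r) :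
    min 1 (a * b / r ^ 2) * max r a ≤ 4 * b := by
  rcases le_or_gt a (2 * r) with har | har
  · calc min 1 (a * b / r ^ 2) * max r a ≤ (2 * r) * b / r ^ 2 * (2 * r) := by
          gcongr
          · exact (min_le_right _ _).trans (by gcongr)
          · exact max_le (by linarith) har
      _ = 4 * b := by field_simp; ring
  · calc min 1 (a * b / r ^ 2) * max r a ≤ 1 * a := by
          rw [max_eq_right (by linarith)]; gcongr; exact min_le_left _ _
      _ ≤ 4 * b := by linarith

lemma min_one_mul_rpow_neg_le (ha : 0 < a) (hb : 0 < b) (hr : 0 < r) (hab : a ≤ b + r)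
    (hγ0 : 0 ≤ γ) (hγ1 : γ ≤ 1) :
    min 1 (a * b / r ^ 2) * b ^ (-γ) ≤ 4 ^ γ * max r a ^ (-γ) := by
  have hmax : 0 < max r a := lt_max_of_lt_left hr
  have hmin : 0 < min 1 (a * b / r ^ 2) := lt_min one_pos (by positivity)
  calc min 1 (a * b / r ^ 2) * b ^ (-γ)
      ≤ min 1 (a * b / r ^ 2) ^ γ * b ^ (-γ) := by
        gcongr
        exact Real.self_le_rpow_of_le_one hmin.le (min_le_left _ _) hγ1
    _ ≤ (4 * b / max r a) ^ γ * b ^ (-γ) := by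
        gcongr
        exact (le_div_iff₀ hmax).2 (min_one_mul_max_le ha.le hb.le hr hab)
    _ = 4 ^ γ * max r a ^ (-γ) := by
        rw [Real.div_rpow (by positivity) hmax.le, Real.mul_rpow (by norm_num) hb.le,
          Real.rpow_neg hb.le, Real.rpow_neg hmax.le]
        field_simp

lemma le_two_mul_min_one_mul_max (hs : 0 < s) (hu : 0 ≤ u) (hr : 0 < r) (hus : u ≤ s + r) :
    u ≤ 2 * (min 1 (s * u / r ^ 2) * max s (r ^ 2 / s)) := by
  have hr_le : r ≤ max s (r ^ 2 / s) := by
    rcases le_total r s with hrs | hrs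
    · exact le_max_of_le_left hrs
    · exact le_max_of_le_right (by rw [le_div_iff₀ hs]; nlinarith)
  rcases min_choice 1 (s * u / r ^ 2) with h | h <;> rw [h]
  · linarith [le_max_left s (r ^ 2 / s)]
  · calc u ≤ 2 * (s * u / r ^ 2 * (r ^ 2 / s)) := by
          rw [show s * u / r ^ 2 * (r ^ 2 / s) = u by field_simp]; linarith
      _ ≤ _ := by gcongr; exact le_max_right _ _

lemma min_one_rpow_neg_mul_rpow_le (hs : 0 < s) (hu : 0 < u) (hr : 0 < r) (hus : u ≤ s + r)
    (hα : 0 ≤ α) :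
    min 1 (s * u / r ^ 2) ^ (-α) * u ^ α ≤ 2 ^ α * max s (r ^ 2 / s) ^ α := by
  have hmax : 0 < max s (r ^ 2 / s) := lt_max_of_lt_left hs
  have hmin : 0 < min 1 (s * u / r ^ 2) := lt_min one_pos (by positivity)
  rw [Real.rpow_neg hmin.le, inv_mul_le_iff₀ (by positivity), mul_left_comm,
    ← Real.mul_rpow hmin.le hmax.le, ← Real.mul_rpow two_pos.le (by positivity)]
  exact Real.rpow_le_rpow hu.le (le_two_mul_min_one_mul_max hs hu.le hr hus) hα

lemma rpow_mul_max_rpow_le (hs : 0 < s) (hr : 0 < r) (he : e + 2 * α ≤ 0) :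
    r ^ e * max s (r ^ 2 / s) ^ α ≤ min r s ^ e * s ^ α := by
  rcases le_total r s with hrs | hsr
  · rw [min_eq_left hrs, max_eq_left (by rw [div_le_iff₀ hs]; nlinarith)]
  · rw [min_eq_right hsr, max_eq_right (by rw [le_div_iff₀ hs]; nlinarith)]
    calc r ^ e * (r ^ 2 / s) ^ α = r ^ (e + 2 * α) * s ^ (-α) := by
          rw [Real.div_rpow (by positivity) hs.le, Real.rpow_add hr, Real.rpow_mul hr.le,
            Real.rpow_neg hs.le, Real.rpow_two, div_eq_mul_inv, mul_assoc]
      _ ≤ s ^ (e + 2 * α) * s ^ (-α) := by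
          gcongr ?_ * _
          exact Real.rpow_le_rpow_of_nonpos hs hsr he
      _ = s ^ e * s ^ α := by
          rw [← Real.rpow_add hs, ← Real.rpow_add hs]
          congr 1
          ring

end KernelFactors

section Frontier

variable {X : Type*} [PseudoMetricSpace X] {Ω : Set X} {x : X}

lemma infDist_frontier_pos [PreconnectedSpace X] (hΩo : IsOpen Ω) (hΩ : Ω ≠ univ) (hx : x ∈ Ω) :
    0 < infDist x (frontier Ω) := by
  have hne : (frontier Ω).Nonempty := nonempty_frontier_iff.2 ⟨⟨x, hx⟩, hΩ⟩
  refine (isClosed_frontier.notMem_iff_infDist_pos hne).1 fun hxf ↦ ?_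
  exact (hΩo.frontier_eq ▸ hxf).2 hx

lemma infDist_frontier_le_diam (hΩ : Bornology.IsBounded Ω) (hx : x ∈ Ω) :
    infDist x (frontier Ω) ≤ diam Ω := by
  rcases (frontier Ω).eq_empty_or_nonempty with hempty | ⟨z, hz⟩
  · simpa [hempty] using diam_nonneg
  · calc infDist x (frontier Ω) ≤ dist x z := infDist_le_dist_of_mem hz
      _ ≤ diam (closure Ω) :=
        dist_le_diam_of_mem hΩ.closure (subset_closure hx) (frontier_subset_closure hz)
      _ = diam Ω := diam_closure Ω

end Frontier

section GreenKernel

variable {E : Type*} [NormedAddCommGroup E] [NormedSpace ℝ E] {Ω : Set E} {α γ : ℝ} {x y : E}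

/-- The two-sided bound for the Green function of `Δ + μ|x|^{-2}` in `Ω`, multiplied by the density
`|y|^α d(y)^{-γ}` against which the potential is formed. The dimension is `finrank ℝ E`; on the
diagonal `x = y` the value is `0` rather than `∞` in dimension other than two. -/
noncomputable def weightedGreenKernel (Ω : Set E) (α γ : ℝ) (x y : E) : ℝ :=
  dist x y ^ (2 - (finrank ℝ E : ℝ)) *
    min 1 (infDist x (frontier Ω) * infDist y (frontier Ω) / dist x y ^ 2) *
    (min 1 (‖x‖ * ‖y‖ / dist x y ^ 2)) ^ (-α) *
    (‖y‖ ^ α * infDist y (frontier Ω) ^ (-γ))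

/-- The weight `d(x) |x|^{-α}` on `Ω`, with respect to which superlevel sets are measured. -/
noncomputable def greenWeight (Ω : Set E) (α : ℝ) (x : E) : ℝ :=
  infDist x (frontier Ω) * ‖x‖ ^ (-α)

lemma measurable_weightedGreenKernel [MeasurableSpace E] [BorelSpace E]
    [SecondCountableTopology E] : Measurable (Function.uncurry (weightedGreenKernel Ω α γ)) := by
  unfold weightedGreenKernel Function.uncurry
  fun_prop

lemma weightedGreenKernel_self (hn : (finrank ℝ E : ℝ) ≠ 2) :
    weightedGreenKernel Ω α γ x x = 0 := by
  simp [weightedGreenKernel, Real.zero_rpow (sub_ne_zero.2 hn.symm)]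

lemma weightedGreenKernel_le (hΩo : IsOpen Ω) (hΩ : Ω ≠ univ) (hα0 : 0 ≤ α)
    (hα : α ≤ ((finrank ℝ E : ℝ) - 2) / 2) (hγ0 : 0 ≤ γ) (hγ1 : γ ≤ 1) (hx : x ∈ Ω \ {0})
    (hy : y ∈ Ω \ {0}) (hxy : x ≠ y) :
    weightedGreenKernel Ω α γ x y ≤ 4 ^ γ * 2 ^ α *
      (max (dist x y) (infDist x (frontier Ω)) ^ (-γ) *
        (min (dist x y) ‖x‖ ^ (2 - (finrank ℝ E : ℝ)) * ‖x‖ ^ α)) := by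
  have hr : 0 < dist x y := dist_pos.2 hxy
  have hx0 : 0 < ‖x‖ := norm_pos_iff.2 hx.2
  have hy0 : 0 < ‖y‖ := norm_pos_iff.2 hy.2
  have hdx : 0 < infDist x (frontier Ω) := infDist_frontier_pos hΩo hΩ hx.1
  have hdy : 0 < infDist y (frontier Ω) := infDist_frontier_pos hΩo hΩ hy.1
  have hyx : ‖y‖ ≤ ‖x‖ + dist x y := by
    rw [dist_comm, dist_eq_norm]
    exact norm_le_norm_add_norm_sub' y x
  have hboundary := min_one_mul_rpow_neg_le hdx hdy hr infDist_le_infDist_add_dist hγ0 hγ1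
  have hsingular := min_one_rpow_neg_mul_rpow_le hx0 hy0 hr hyx hα0
  have hpole := rpow_mul_max_rpow_le (e := 2 - (finrank ℝ E : ℝ)) (α := α) hx0 hr (by linarith)
  unfold weightedGreenKernel
  set a := infDist x (frontier Ω)
  set b := infDist y (frontier Ω)
  set r := dist x y
  set m := 2 - (finrank ℝ E : ℝ)
  calc r ^ m * min 1 (a * b / r ^ 2) * min 1 (‖x‖ * ‖y‖ / r ^ 2) ^ (-α) * (‖y‖ ^ α * b ^ (-γ))
      = r ^ m * ((min 1 (a * b / r ^ 2) * b ^ (-γ)) *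
          (min 1 (‖x‖ * ‖y‖ / r ^ 2) ^ (-α) * ‖y‖ ^ α)) := by ring
    _ ≤ r ^ m * ((4 ^ γ * max r a ^ (-γ)) * (2 ^ α * max ‖x‖ (r ^ 2 / ‖x‖) ^ α)) := by gcongr
    _ = 4 ^ γ * 2 ^ α * (max r a ^ (-γ) * (r ^ m * max ‖x‖ (r ^ 2 / ‖x‖) ^ α)) := by ring
    _ ≤ 4 ^ γ * 2 ^ α * (max r a ^ (-γ) * (min r ‖x‖ ^ m * ‖x‖ ^ α)) := by gcongr

lemma weightedGreenKernel_le_rpow_min (hΩo : IsOpen Ω) (hΩ : Ω ≠ univ) (hα0 : 0 ≤ α)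
    (hα : α ≤ ((finrank ℝ E : ℝ) - 2) / 2) (hγ0 : 0 ≤ γ) (hγ1 : γ ≤ 1) (hx : x ∈ Ω \ {0})
    (hy : y ∈ Ω \ {0}) (hxy : x ≠ y) :
    weightedGreenKernel Ω α γ x y ≤ 4 ^ γ * 2 ^ α * ‖x‖ ^ α *
      min (dist x y) ‖x‖ ^ (-((finrank ℝ E : ℝ) + γ - 2)) := by
  have hp : 0 < min (dist x y) ‖x‖ := lt_min (dist_pos.2 hxy) (norm_pos_iff.2 hx.2)
  have hmax : max (dist x y) (infDist x (frontier Ω)) ^ (-γ) ≤ min (dist x y) ‖x‖ ^ (-γ) :=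
    Real.rpow_le_rpow_of_nonpos hp ((min_le_left _ _).trans (le_max_left _ _)) (by linarith)
  calc weightedGreenKernel Ω α γ x y
      ≤ 4 ^ γ * 2 ^ α * (max (dist x y) (infDist x (frontier Ω)) ^ (-γ) *
          (min (dist x y) ‖x‖ ^ (2 - (finrank ℝ E : ℝ)) * ‖x‖ ^ α)) :=
        weightedGreenKernel_le hΩo hΩ hα0 hα hγ0 hγ1 hx hy hxy
    _ ≤ 4 ^ γ * 2 ^ α * (min (dist x y) ‖x‖ ^ (-γ) *
          (min (dist x y) ‖x‖ ^ (2 - (finrank ℝ E : ℝ)) * ‖x‖ ^ α)) := by gcongr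
    _ = 4 ^ γ * 2 ^ α * ‖x‖ ^ α *
          min (dist x y) ‖x‖ ^ (-((finrank ℝ E : ℝ) + γ - 2)) := by
        rw [show -((finrank ℝ E : ℝ) + γ - 2) = -γ + (2 - finrank ℝ E) by ring, Real.rpow_add hp]
        ring

lemma greenWeight_mul_weightedGreenKernel_le (hΩo : IsOpen Ω) (hΩ : Ω ≠ univ) (hα0 : 0 ≤ α)
    (hα : α ≤ ((finrank ℝ E : ℝ) - 2) / 2) (hγ0 : 0 ≤ γ) (hγ1 : γ ≤ 1) (hx : x ∈ Ω \ {0})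
    (hy : y ∈ Ω \ {0}) (hxy : x ≠ y) :
    greenWeight Ω α x * weightedGreenKernel Ω α γ x y ≤
      4 ^ γ * 2 ^ α * infDist x (frontier Ω) ^ (1 - γ) *
        min (dist x y) ‖x‖ ^ (2 - (finrank ℝ E : ℝ)) := by
  have hx0 : 0 < ‖x‖ := norm_pos_iff.2 hx.2
  have hd : 0 < infDist x (frontier Ω) := infDist_frontier_pos hΩo hΩ hx.1
  have hmax : max (dist x y) (infDist x (frontier Ω)) ^ (-γ) ≤ infDist x (frontier Ω) ^ (-γ) :=
    Real.rpow_le_rpow_of_nonpos hd (le_max_right _ _) (by linarith)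
  unfold greenWeight
  calc infDist x (frontier Ω) * ‖x‖ ^ (-α) * weightedGreenKernel Ω α γ x y
      ≤ infDist x (frontier Ω) * ‖x‖ ^ (-α) * (4 ^ γ * 2 ^ α *
          (infDist x (frontier Ω) ^ (-γ) *
            (min (dist x y) ‖x‖ ^ (2 - (finrank ℝ E : ℝ)) * ‖x‖ ^ α))) := by
        gcongr
        exact (weightedGreenKernel_le hΩo hΩ hα0 hα hγ0 hγ1 hx hy hxy).trans (by gcongr)
    _ = 4 ^ γ * 2 ^ α * infDist x (frontier Ω) ^ (1 - γ) *
          min (dist x y) ‖x‖ ^ (2 - (finrank ℝ E : ℝ)) := by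
        rw [sub_eq_add_neg 1 γ, Real.rpow_add hd, Real.rpow_one, Real.rpow_neg hx0.le]
        field_simp

lemma exists_weightedGreenKernel_le_rpow_min (hn : (finrank ℝ E : ℝ) ≠ 2) (hΩo : IsOpen Ω)
    (hΩ : Ω ≠ univ) (hΩb : Bornology.IsBounded Ω) (hα0 : 0 ≤ α)
    (hα : α ≤ ((finrank ℝ E : ℝ) - 2) / 2) (hγ0 : 0 ≤ γ) (hγ1 : γ ≤ 1) :
    ∃ B : ℝ, 0 < B ∧ ∀ x ∈ Ω \ {0}, ∀ y ∈ Ω \ {0},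
      weightedGreenKernel Ω α γ x y ≤
        B * min (dist x y) ‖x‖ ^ (-((finrank ℝ E : ℝ) + γ - 2)) ∧
      greenWeight Ω α x * weightedGreenKernel Ω α γ x y ≤
        B * min (dist x y) ‖x‖ ^ (2 - (finrank ℝ E : ℝ)) := by
  obtain ⟨R, hR0, hR⟩ := hΩb.exists_pos_norm_le
  refine ⟨4 ^ γ * 2 ^ α * (R ^ α + diam Ω ^ (1 - γ)), by positivity, fun x hx y hy ↦ ?_⟩
  rcases eq_or_ne x y with rfl | hxy
  · rw [weightedGreenKernel_self hn, mul_zero]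
    constructor <;> positivity
  constructor
  · refine (weightedGreenKernel_le_rpow_min hΩo hΩ hα0 hα hγ0 hγ1 hx hy hxy).trans ?_
    gcongr
    have hxR : ‖x‖ ^ α ≤ R ^ α := Real.rpow_le_rpow (norm_nonneg x) (hR x hx.1) hα0
    exact hxR.trans (le_add_of_nonneg_right (Real.rpow_nonneg diam_nonneg _))
  · refine (greenWeight_mul_weightedGreenKernel_le hΩo hΩ hα0 hα hγ0 hγ1 hx hy hxy).trans ?_
    gcongr
    have hxd : infDist x (frontier Ω) ^ (1 - γ) ≤ diam Ω ^ (1 - γ) :=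
      Real.rpow_le_rpow infDist_nonneg (infDist_frontier_le_diam hΩb hx.1) (by linarith)
    exact hxd.trans (le_add_of_nonneg_left (by positivity))

end GreenKernel

section WeakEstimate

variable {E : Type*} [NormedAddCommGroup E] [MeasurableSpace E] [BorelSpace E] (μ : Measure E)
  {Ω : Set E} {α γ : ℝ}

/-- The measure `d(x) |x|^{-α} dx` on `Ω \ {0}`, where `dx` is `μ`. -/
noncomputable def greenWeightMeasure (Ω : Set E) (α : ℝ) : Measure E :=
  (μ.restrict (Ω \ {0})).withDensity fun x ↦ ENNReal.ofReal (greenWeight Ω α x)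

instance [SFinite μ] : SFinite (greenWeightMeasure μ Ω α) :=
  Measure.withDensity.instSFinite

lemma greenWeightMeasure_setOf [SFinite μ] (hΩo : IsOpen Ω) (P : E → Prop) :
    greenWeightMeasure μ Ω α {x | P x} =
      ∫⁻ x in {x | x ∈ Ω \ {0} ∧ P x}, ENNReal.ofReal (greenWeight Ω α x) ∂μ := by
  rw [greenWeightMeasure, withDensity_apply',
    Measure.restrict_restrict' (hΩo.measurableSet.diff (measurableSet_singleton 0)), inter_comm]
  rfl

variable [NormedSpace ℝ E] [FiniteDimensional ℝ E] [μ.IsAddHaarMeasure]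

lemma exists_greenWeightMeasure_superlevel_le (hn : 2 < finrank ℝ E) (hΩo : IsOpen Ω)
    (hΩb : Bornology.IsBounded Ω) (hα0 : 0 ≤ α) (hα : α ≤ ((finrank ℝ E : ℝ) - 2) / 2)
    (hγ0 : 0 ≤ γ) (hγ1 : γ ≤ 1) :
    ∃ A : ℝ, 0 < A ∧ ∀ y ∈ Ω \ {0}, ∀ τ > 0,
      greenWeightMeasure μ Ω α {x | τ < weightedGreenKernel Ω α γ x y} ≤ ENNReal.ofReal
        (A * τ ^ (-((finrank ℝ E + γ) / ((finrank ℝ E : ℝ) + γ - 2)))) := by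
  have : Nontrivial E := Module.nontrivial_of_finrank_pos (R := ℝ) (two_pos.trans hn)
  have hn' : 2 < (finrank ℝ E : ℝ) := by exact_mod_cast hn
  have hΩ : Ω ≠ univ := fun h ↦ NormedSpace.unbounded_univ ℝ E (h ▸ hΩb)
  obtain ⟨B, hB, hker⟩ :=
    exists_weightedGreenKernel_le_rpow_min hn'.ne' hΩo hΩ hΩb hα0 hα hγ0 hγ1
  set n := (finrank ℝ E : ℝ)
  set q := (n + γ) / (n + γ - 2) with hq_def
  have hκ : 0 < n + γ - 2 := by linarith
  have hq : 1 + (n + (2 - n)) / (n + γ - 2) = q := by rw [hq_def]; field_simp; ring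
  set c := n * μ.real (ball 0 1) / (n + (2 - n))
  have hball : 0 < μ.real (ball (0 : E) 1) :=
    ENNReal.toReal_pos (measure_ball_pos _ _ one_pos).ne' measure_ball_lt_top.ne
  have hc : 0 < c := div_pos (by positivity) (by linarith)
  refine ⟨2 * (c * B ^ q), by positivity, fun y hy τ hτ ↦ ?_⟩
  have hpoles := setLIntegral_le_of_two_poles μ (y := y) (z := 0) (e := 2 - n) (k := n + γ - 2)
    (S := {x | x ∈ Ω \ {0} ∧ τ < weightedGreenKernel Ω α γ x y}) (w := greenWeight Ω α)
    (by linarith) hκ hB.le hτ ?_ ?_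
  · rw [greenWeightMeasure_setOf μ hΩo]
    refine hpoles.trans_eq ?_
    rw [hq, Real.div_rpow hB.le hτ.le, Real.rpow_neg hτ.le, ← ENNReal.ofReal_ofNat 2,
      ← ENNReal.ofReal_mul two_pos.le]
    congr 1
    ring
  · rintro x ⟨hx, hlt⟩
    rw [dist_zero_right]
    exact hlt.trans_le (hker x hx y hy).1
  · rintro x ⟨hx, hlt⟩
    have hw : 0 ≤ greenWeight Ω α x := mul_nonneg infDist_nonneg (by positivity)
    calc τ * greenWeight Ω α x ≤ greenWeight Ω α x * weightedGreenKernel Ω α γ x y := by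
          rw [mul_comm]; gcongr
      _ ≤ B * min (dist x y) (dist x 0) ^ (2 - n) := by
          rw [dist_zero_right]; exact (hker x hx y hy).2

theorem weak_estimate_green_subcritical_general (hn : 2 < finrank ℝ E) (hΩo : IsOpen Ω)
    (hΩb : Bornology.IsBounded Ω) (hα0 : 0 ≤ α) (hα : α ≤ ((finrank ℝ E : ℝ) - 2) / 2)
    (hγ0 : 0 ≤ γ) (hγ1 : γ ≤ 1) :
    ∃ C : ℝ, 0 < C ∧ ∀ ω : Measure E, IsFiniteMeasure ω → ∀ t : ℝ, 0 < t →
      ∫⁻ x in {x | x ∈ Ω \ {0} ∧ ENNReal.ofReal t <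
          ∫⁻ y in Ω \ {0}, ENNReal.ofReal (weightedGreenKernel Ω α γ x y) ∂ω},
        ENNReal.ofReal (greenWeight Ω α x) ∂μ
      ≤ ENNReal.ofReal (C * t ^ (-(((finrank ℝ E : ℝ) + γ) / ((finrank ℝ E : ℝ) + γ - 2)))) *
          ω (Ω \ {0}) ^ (((finrank ℝ E : ℝ) + γ) / ((finrank ℝ E : ℝ) + γ - 2)) := by
  obtain ⟨A, hA, hlevel⟩ :=
    exists_greenWeightMeasure_superlevel_le μ hn hΩo hΩb hα0 hα hγ0 hγ1
  have hn' : 2 < (finrank ℝ E : ℝ) := by exact_mod_cast hn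
  set q := ((finrank ℝ E : ℝ) + γ) / ((finrank ℝ E : ℝ) + γ - 2)
  have hq : 1 < q := (one_lt_div (by linarith)).2 (by linarith)
  have hΩm : MeasurableSet (Ω \ {0}) := hΩo.measurableSet.diff (measurableSet_singleton 0)
  refine ⟨2 ^ q / (q - 1) * A, mul_pos (div_pos (by positivity) (by linarith)) hA,
    fun ω _ t ht ↦ ?_⟩
  rw [← greenWeightMeasure_setOf μ hΩo, ← Measure.restrict_apply_univ (Ω \ {0})]
  exact measure_lt_lintegral_kernel_le_of_weak_type measurable_weightedGreenKernel hq hA.le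
    (ae_restrict_of_forall_mem hΩm hlevel) ht

end WeakEstimate

/-- Weak Lebesgue estimate for the Green-type potential of `Δ + μ|x|^{−2}`,
`0 < μ < ((N−2)/2)²`, against the measure `|y|^α d(y)^{−γ} dω(y)`, with respect to
the weight `d(x)|x|^{−α}` and exponent `q = (N+γ)/(N+γ−2)`. -/
theorem weak_estimate_green_subcritical (N : ℕ) (hN : 2 < N)
    (Ω : Set (EuclideanSpace ℝ (Fin N)))
    (hΩo : IsOpen Ω) (hΩb : Bornology.IsBounded Ω) (h0 : (0 : EuclideanSpace ℝ (Fin N)) ∈ Ω)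
    (α γ : ℝ) (hα0 : 0 < α) (hα : α < ((N : ℝ) - 2) / 2) (hγ0 : 0 ≤ γ) (hγ1 : γ ≤ 1) :
    ∃ C : ℝ, 0 < C ∧ ∀ (ω : Measure (EuclideanSpace ℝ (Fin N))), IsFiniteMeasure ω →
      ∀ t : ℝ, 0 < t →
      (∫⁻ x in {x | x ∈ Ω \ {0} ∧ ENNReal.ofReal t <
          ∫⁻ y in Ω \ {0}, ENNReal.ofReal
            (dist x y ^ (2 - (N : ℝ)) *
              min 1 (infDist x (frontier Ω) * infDist y (frontier Ω) / dist x y ^ 2) *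
              (min 1 (‖x‖ * ‖y‖ / dist x y ^ 2)) ^ (-α) *
              (‖y‖ ^ α * infDist y (frontier Ω) ^ (-γ))) ∂ω},
        ENNReal.ofReal (infDist x (frontier Ω) * ‖x‖ ^ (-α)))
      ≤ ENNReal.ofReal (C * t ^ (-(((N : ℝ) + γ) / ((N : ℝ) + γ - 2)))) *
          (ω (Ω \ {0})) ^ (((N : ℝ) + γ) / ((N : ℝ) + γ - 2)) := by
  simpa only [weightedGreenKernel, greenWeight, finrank_euclideanSpace_fin] using
    weak_estimate_green_subcritical_general volume (by simpa using hN) hΩo hΩb hα0.le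
      (by simpa using hα.le) hγ0 hγ1
end

section
/- Let N > 2 be an integer, Ω ⊂ ℝ^N a nonempty bounded open set with 0 ∈ Ω, let 0 ≤ γ ≤ 1, and set q = (N+γ)/(N+γ−2) and H = (N−2)/2. Then there exists C = C(N, Ω, γ) > 0 such that for every finite positive Borel measure ω on Ω ∖ {0} and every λ > 0: ∫_{{x ∈ Ω∖{0} : U(x) > λ}} d(x)|x|^{−H} dx ≤ C λ^{−q} ω(Ω∖{0})^q, where U(x) = ∫_{Ω∖{0}} [ |x−y|^{2−N} · min{1, d(x)d(y)/|x−y|^2} · ( min{1, |x||y|/|x−y|^2} )^{−H} + (|x||y|)^{−H} · | ln( min{1, |x−y|^2/(d(x)d(y))} ) | ] · |y|^{H} d(y)^{−γ} dω(y). -/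
open MeasureTheory Metric Set

/-!
For `q > 1` weak `L^q` is normable: by Kolmogorov's inequality a weak-`L^q` function `f` satisfies
`∫_E f dν ≤ C ν(E)^{1 - 1/q}`, so integrating over `y` and taking for `E` the level set of the
potential reduces the estimate to a weak-`L^q` bound for each section `K(·, y)`, uniform in `y`,
with respect to `dν = d(x) |x|^{-H} dx`.

With `m(x) = min(|x - y|, |x|)`, each of the two parts of the kernel satisfies `K ≤ A m^{-b}` and
`K d(x) |x|^{-H} ≤ B m^{-a}`. Hence on `{K > s}` the weight is at most `(B / s) m^{-a}` while
`m < (A / s)^{1 / b}`, and integrating gives `ν {K > s} ≤ C s^{-1 - (N - a) / b}`. The Riesz part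
has `a = 2H`, `b = 2H + γ`, which is exactly the exponent `q`; the logarithm is dominated by any
power `r^{-ε}`, and `ε` can be chosen so that the second part gives `q` as well.
-/

section WeakLp

variable {α β : Type*} [MeasurableSpace α] [MeasurableSpace β] {ν : Measure α} {ω : Measure β}
  {f g : α → ℝ} {q A B : ℝ}

theorem lintegral_Ioi_ofReal_rpow_neg {T : ℝ} (hq : 1 < q) (hT : 0 < T) :
    ∫⁻ s in Ioi T, ENNReal.ofReal (s ^ (-q)) = ENNReal.ofReal (T ^ (1 - q) / (q - 1)) := by
  rw [← ofReal_integral_eq_lintegral_ofReal (integrableOn_Ioi_rpow_of_lt (by linarith) hT),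
    integral_Ioi_rpow_of_lt (by linarith) hT]
  · rw [neg_div, ← div_neg]
    ring_nf
  · filter_upwards [ae_restrict_mem measurableSet_Ioi] with s hs
    have : 0 < s := hT.trans hs
    positivity

/-- The weak-`L^q` bound `ν {f > s} ≤ A s^{-q}`, `s > 0`, for the positive part of `f`. It is the
class in which the sections of the kernel lie, uniformly in the pole. -/
def WeakLpBound (ν : Measure α) (f : α → ℝ) (q A : ℝ) : Prop :=
  ∀ s : ℝ, 0 < s → ν {x | s < f x} ≤ ENNReal.ofReal (A * s ^ (-q))

namespace WeakLpBound

theorem add (hf : WeakLpBound ν f q A) (hg : WeakLpBound ν g q B) (hA : 0 ≤ A) (hB : 0 ≤ B) :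
    WeakLpBound ν (fun x => f x + g x) q (2 ^ q * (A + B)) := by
  intro s hs
  have hsub : {x | s < f x + g x} ⊆ {x | s / 2 < f x} ∪ {x | s / 2 < g x} := by
    intro x (hx : s < f x + g x)
    by_cases hfx : s / 2 < f x
    · exact .inl hfx
    · exact .inr (show s / 2 < g x by linarith)
  have hpow : (s / 2) ^ (-q) = 2 ^ q * s ^ (-q) := by
    rw [Real.div_rpow hs.le zero_le_two, Real.rpow_neg zero_le_two, div_inv_eq_mul, mul_comm]
  calc ν {x | s < f x + g x}
      ≤ ν {x | s / 2 < f x} + ν {x | s / 2 < g x} :=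
        (measure_mono hsub).trans (measure_union_le _ _)
    _ ≤ ENNReal.ofReal (A * (s / 2) ^ (-q)) + ENNReal.ofReal (B * (s / 2) ^ (-q)) :=
        add_le_add (hf _ (half_pos hs)) (hg _ (half_pos hs))
    _ = ENNReal.ofReal (2 ^ q * (A + B) * s ^ (-q)) := by
        rw [← ENNReal.ofReal_add (by positivity) (by positivity), hpow]
        congr 1
        ring

theorem setLIntegral_le_add (h : WeakLpBound ν f q A) (hf : AEMeasurable f ν) (hq : 1 < q)
    (hA : 0 ≤ A) (E : Set α) {T : ℝ} (hT : 0 < T) :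
    ∫⁻ x in E, ENNReal.ofReal (f x) ∂ν ≤
      ν E * ENNReal.ofReal T + ENNReal.ofReal (A * (T ^ (1 - q) / (q - 1))) := by
  have layercake : ∫⁻ x in E, ENNReal.ofReal (f x) ∂ν
      = ∫⁻ s in Ioi 0, ν.restrict E {x | s < f x} := by
    have hpos : ∀ x, ENNReal.ofReal (f x) = ENNReal.ofReal (max (f x) 0) := fun x => by simp
    simp_rw [hpos]
    rw [lintegral_eq_lintegral_meas_lt (f := fun x => max (f x) 0) _
      (.of_forall fun x => le_max_right _ _) (hf.restrict.max aemeasurable_const)]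
    refine setLIntegral_congr_fun measurableSet_Ioi fun s hs => ?_
    simp [not_lt.2 (le_of_lt (mem_Ioi.1 hs))]
  have low : ∫⁻ s in Ioc 0 T, ν.restrict E {x | s < f x} ≤ ν E * ENNReal.ofReal T :=
    calc ∫⁻ s in Ioc 0 T, ν.restrict E {x | s < f x}
        ≤ ∫⁻ _ in Ioc 0 T, ν E := lintegral_mono fun s =>
          (measure_mono (subset_univ _)).trans_eq (Measure.restrict_apply_univ E)
      _ = ν E * ENNReal.ofReal T := by simp
  have high : ∫⁻ s in Ioi T, ν.restrict E {x | s < f x}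
      ≤ ENNReal.ofReal (A * (T ^ (1 - q) / (q - 1))) :=
    calc ∫⁻ s in Ioi T, ν.restrict E {x | s < f x}
        ≤ ∫⁻ s in Ioi T, ENNReal.ofReal A * ENNReal.ofReal (s ^ (-q)) :=
          setLIntegral_mono' measurableSet_Ioi fun s hs => by
            rw [← ENNReal.ofReal_mul hA]
            exact (Measure.restrict_apply_le _ _).trans (h s (hT.trans hs))
      _ = ENNReal.ofReal (A * (T ^ (1 - q) / (q - 1))) := by
          rw [lintegral_const_mul' _ _ ENNReal.ofReal_ne_top, lintegral_Ioi_ofReal_rpow_neg hq hT,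
            ← ENNReal.ofReal_mul hA]
  rw [layercake, ← Ioc_union_Ioi_eq_Ioi hT.le]
  exact (lintegral_union_le _ _ _).trans (add_le_add low high)

theorem setLIntegral_le (h : WeakLpBound ν f q A) (hf : AEMeasurable f ν) (hq : 1 < q)
    (hA : 0 ≤ A) (E : Set α) :
    ∫⁻ x in E, ENNReal.ofReal (f x) ∂ν ≤
      ENNReal.ofReal (1 + A / (q - 1)) * ν E ^ (1 - q⁻¹) := by
  have : 0 < q := zero_lt_one.trans hq
  have : 0 < q - 1 := sub_pos.2 hq
  have hexp : 0 < 1 - q⁻¹ := sub_pos.2 (inv_lt_one_of_one_lt₀ hq)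
  rcases eq_or_ne (ν E) 0 with hE0 | hE0
  · simp [setLIntegral_measure_zero _ _ hE0]
  rcases eq_or_ne (ν E) ⊤ with hEtop | hEtop
  · have hconst : ENNReal.ofReal (1 + A / (q - 1)) ≠ 0 := by
      rw [ne_eq, ENNReal.ofReal_eq_zero, not_le]
      positivity
    simp [hEtop, ENNReal.top_rpow_of_pos hexp, ENNReal.mul_top hconst]
  obtain ⟨W, hW, hνE⟩ : ∃ W : ℝ, 0 < W ∧ ν E = ENNReal.ofReal W :=
    ⟨(ν E).toReal, ENNReal.toReal_pos hE0 hEtop, (ENNReal.ofReal_toReal hEtop).symm⟩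
  -- The height at which the two bounds `ν E` and `A s^{-q}` of the distribution function cross.
  have hT : 0 < W ^ (-q⁻¹) := by positivity
  have hlow : W * W ^ (-q⁻¹) = W ^ (1 - q⁻¹) := by
    rw [sub_eq_add_neg, Real.rpow_add hW, Real.rpow_one]
  have hhigh : (W ^ (-q⁻¹)) ^ (1 - q) = W ^ (1 - q⁻¹) := by
    rw [← Real.rpow_mul hW.le]
    congr 1
    field_simp
    ring
  refine (h.setLIntegral_le_add hf hq hA E hT).trans_eq ?_
  rw [hνE, ENNReal.ofReal_rpow_of_pos hW, ← ENNReal.ofReal_mul hW.le,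
    ← ENNReal.ofReal_mul (by positivity), ← ENNReal.ofReal_add (by positivity) (by positivity),
    hlow, hhigh]
  congr 1
  ring

end WeakLpBound

theorem le_div_rpow_of_mul_le_mul_rpow_one_sub_inv {W K t : ENNReal} (hW : W ≠ ⊤) (ht : t ≠ 0)
    (ht' : t ≠ ⊤) (hq : 0 < q) (h : t * W ≤ K * W ^ (1 - q⁻¹)) : W ≤ (K / t) ^ q := by
  rcases eq_or_ne W 0 with rfl | hW0
  · exact zero_le
  have hpow : W ^ (1 - q⁻¹) * W ^ q⁻¹ = W := by
    rw [← ENNReal.rpow_add _ _ hW0 hW, sub_add_cancel, ENNReal.rpow_one]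
  have hne : W ^ (1 - q⁻¹) ≠ 0 := by simp [ENNReal.rpow_eq_zero_iff, hW0, hW]
  have hne' : W ^ (1 - q⁻¹) ≠ ⊤ := by simp [ENNReal.rpow_eq_top_iff, hW0, hW]
  rw [← ENNReal.rpow_inv_le_iff hq, ENNReal.le_div_iff_mul_le (.inl ht) (.inl ht'),
    ← ENNReal.mul_le_mul_iff_left hne hne']
  calc W ^ q⁻¹ * t * W ^ (1 - q⁻¹) = t * (W ^ (1 - q⁻¹) * W ^ q⁻¹) := by ring
    _ = t * W := by rw [hpow]
    _ ≤ K * W ^ (1 - q⁻¹) := h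

theorem measure_lt_lintegral_le_of_weakLpBound [IsFiniteMeasure ν] [SFinite ω] {k : α → β → ℝ}
    (hk : Measurable (Function.uncurry k)) (hq : 1 < q) (hA : 0 ≤ A)
    (h : ∀ᵐ y ∂ω, WeakLpBound ν (fun x => k x y) q A) {t : ℝ} (ht : 0 < t) :
    ν {x | ENNReal.ofReal t < ∫⁻ y, ENNReal.ofReal (k x y) ∂ω} ≤
      ENNReal.ofReal ((1 + A / (q - 1)) ^ q * t ^ (-q)) * ω univ ^ q := by
  have hq0 : 0 < q := zero_lt_one.trans hq
  have : 0 < q - 1 := sub_pos.2 hq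
  set E := {x | ENNReal.ofReal t < ∫⁻ y, ENNReal.ofReal (k x y) ∂ω}
  have hE : MeasurableSet E :=
    measurableSet_lt measurable_const hk.ennreal_ofReal.lintegral_prod_right'
  set B := 1 + A / (q - 1)
  have hB : 0 ≤ B := by positivity
  have key : ENNReal.ofReal t * ν E ≤ ENNReal.ofReal B * ω univ * ν E ^ (1 - q⁻¹) :=
    calc ENNReal.ofReal t * ν E
        = ∫⁻ _ in E, ENNReal.ofReal t ∂ν := (setLIntegral_const _ _).symm
      _ ≤ ∫⁻ x in E, ∫⁻ y, ENNReal.ofReal (k x y) ∂ω ∂ν :=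
          setLIntegral_mono' hE fun x hx => le_of_lt hx
      _ = ∫⁻ y, ∫⁻ x in E, ENNReal.ofReal (k x y) ∂ν ∂ω :=
          lintegral_lintegral_swap hk.ennreal_ofReal.aemeasurable
      _ ≤ ∫⁻ _, ENNReal.ofReal B * ν E ^ (1 - q⁻¹) ∂ω :=
          lintegral_mono_ae <| h.mono fun y hy =>
            hy.setLIntegral_le hk.of_uncurry_right.aemeasurable hq hA E
      _ = ENNReal.ofReal B * ω univ * ν E ^ (1 - q⁻¹) := by
          rw [lintegral_const]
          ring
  calc ν E ≤ (ENNReal.ofReal B * ω univ / ENNReal.ofReal t) ^ q :=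
        le_div_rpow_of_mul_le_mul_rpow_one_sub_inv (measure_ne_top ν E)
          (ENNReal.ofReal_pos.2 ht).ne' ENNReal.ofReal_ne_top hq0 key
    _ = ENNReal.ofReal (B ^ q * t ^ (-q)) * ω univ ^ q := by
        rw [ENNReal.mul_div_right_comm, ENNReal.mul_rpow_of_nonneg _ _ hq0.le,
          ← ENNReal.ofReal_div_of_pos ht, ENNReal.ofReal_rpow_of_nonneg (by positivity) hq0.le,
          Real.div_rpow hB ht.le, Real.rpow_neg ht.le, div_eq_mul_inv]

end WeakLp

section PowerWeight

variable {α : Type*} [MeasurableSpace α] {μ : Measure α} {m : α → ℝ} {N a b c : ℝ}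

theorem weakLpBound_rpow_neg (hm0 : ∀ x, 0 ≤ m x)
    (hm : ∀ ρ : ℝ, 0 < ρ → μ {x | m x < ρ} ≤ ENNReal.ofReal (c * ρ ^ N)) (ha : 0 < a) :
    WeakLpBound μ (fun x => m x ^ (-a)) (N / a) c := by
  intro s hs
  have hsub : {x | s < m x ^ (-a)} ⊆ {x | m x < s ^ (-a)⁻¹} := by
    intro x hx
    rcases (hm0 x).eq_or_lt with h0 | h0
    · exact h0.symm.trans_lt (by positivity)
    · exact (Real.lt_rpow_inv_iff_of_neg h0 hs (neg_lt_zero.2 ha)).2 hx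
  refine (measure_mono hsub).trans ((hm _ (by positivity)).trans_eq ?_)
  rw [← Real.rpow_mul hs.le]
  congr 3
  rw [inv_neg]
  ring

theorem setLIntegral_rpow_neg_le (hmeas : Measurable m) (hm0 : ∀ x, 0 ≤ m x) (hc : 0 ≤ c)
    (hm : ∀ ρ : ℝ, 0 < ρ → μ {x | m x < ρ} ≤ ENNReal.ofReal (c * ρ ^ N)) (ha : 0 < a)
    (haN : a < N) {ρ : ℝ} (hρ : 0 < ρ) :
    ∫⁻ x in {x | m x < ρ}, ENNReal.ofReal (m x ^ (-a)) ∂μ ≤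
      ENNReal.ofReal ((1 + c / (N / a - 1)) * c ^ (1 - a / N) * ρ ^ (N - a)) := by
  have hN : 0 < N := ha.trans haN
  have hq : 1 < N / a := (one_lt_div ha).2 haN
  have : 0 < N / a - 1 := sub_pos.2 hq
  have hexp : 0 ≤ 1 - a / N := sub_nonneg.2 ((div_le_one hN).2 haN.le)
  calc ∫⁻ x in {x | m x < ρ}, ENNReal.ofReal (m x ^ (-a)) ∂μ
      ≤ ENNReal.ofReal (1 + c / (N / a - 1)) * μ {x | m x < ρ} ^ (1 - a / N) := by
        rw [← inv_div N a]
        exact (weakLpBound_rpow_neg hm0 hm ha).setLIntegral_le (by fun_prop) hq hc _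
    _ ≤ ENNReal.ofReal (1 + c / (N / a - 1)) * ENNReal.ofReal (c * ρ ^ N) ^ (1 - a / N) := by
        gcongr
        exact hm ρ hρ
    _ = ENNReal.ofReal ((1 + c / (N / a - 1)) * c ^ (1 - a / N) * ρ ^ (N - a)) := by
        rw [ENNReal.ofReal_rpow_of_nonneg (by positivity) hexp,
          ← ENNReal.ofReal_mul (by positivity), Real.mul_rpow hc (by positivity),
          ← Real.rpow_mul hρ.le, mul_one_sub, mul_div_cancel₀ a hN.ne', mul_assoc]

theorem ae_pos_of_measure_lt_le (hN : 0 < N)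
    (hm : ∀ ρ : ℝ, 0 < ρ → μ {x | m x < ρ} ≤ ENNReal.ofReal (c * ρ ^ N)) : ∀ᵐ x ∂μ, 0 < m x := by
  have hlim : Filter.Tendsto (fun ρ : ℝ => ENNReal.ofReal (c * ρ ^ N)) (nhdsWithin 0 (Ioi 0))
      (nhds 0) := by
    have : Filter.Tendsto (fun ρ : ℝ => ENNReal.ofReal (c * ρ ^ N)) (nhds 0)
        (nhds (ENNReal.ofReal (c * 0 ^ N))) :=
      ENNReal.tendsto_ofReal ((Real.continuousAt_rpow_const 0 N (.inr hN.le)).tendsto.const_mul c)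
    simpa [Real.zero_rpow hN.ne'] using this.mono_left nhdsWithin_le_nhds
  refine nonpos_iff_eq_zero.1 (ge_of_tendsto hlim ?_)
  filter_upwards [self_mem_nhdsWithin] with ρ hρ
  exact (measure_mono fun x hx => (not_lt.1 (show ¬0 < m x from hx)).trans_lt hρ).trans (hm ρ hρ)

theorem withDensity_lt_le_mul_setLIntegral {g w : α → ℝ} {S : Set α} {A B s : ℝ}
    (hpos : ∀ᵐ x ∂μ, 0 < m x) (hb : 0 < b) (hA : 0 < A) (hB : 0 ≤ B) (hS : MeasurableSet S)
    (hg : Measurable g) (hw : ∀ x ∈ S, 0 ≤ w x) (hgA : ∀ x ∈ S, 0 < m x → g x ≤ A * m x ^ (-b))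
    (hgB : ∀ x ∈ S, 0 < m x → g x * w x ≤ B * m x ^ (-a)) (hs : 0 < s) :
    (μ.restrict S).withDensity (fun x => ENNReal.ofReal (w x)) {x | s < g x} ≤
      ENNReal.ofReal (B / s) *
        ∫⁻ x in {x | m x < (A / s) ^ b⁻¹}, ENNReal.ofReal (m x ^ (-a)) ∂μ := by
  have hgs : MeasurableSet {x | s < g x} := measurableSet_lt measurable_const hg
  have hsub : ({x | s < g x} ∩ S : Set α) ≤ᵐ[μ] {x | m x < (A / s) ^ b⁻¹} := by
    filter_upwards [hpos] with x hx hxS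
    have hlt : s < A * m x ^ (-b) := hxS.1.trans_le (hgA x hxS.2 hx)
    rw [Real.rpow_neg hx.le, ← div_eq_mul_inv, lt_div_comm₀ hs (by positivity)] at hlt
    exact (Real.lt_rpow_inv_iff_of_pos hx.le (by positivity) hb).2 hlt
  have hwB : ∀ᵐ x ∂μ.restrict ({x | s < g x} ∩ S),
      ENNReal.ofReal (w x) ≤ ENNReal.ofReal (B / s) * ENNReal.ofReal (m x ^ (-a)) := by
    filter_upwards [ae_restrict_mem (hgs.inter hS), ae_restrict_of_ae hpos] with x hxS hx
    rw [← ENNReal.ofReal_mul (by positivity)]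
    refine ENNReal.ofReal_le_ofReal ?_
    rw [div_mul_eq_mul_div, le_div_iff₀ hs, mul_comm]
    exact (mul_le_mul_of_nonneg_right (le_of_lt hxS.1) (hw x hxS.2)).trans (hgB x hxS.2 hx)
  calc (μ.restrict S).withDensity (fun x => ENNReal.ofReal (w x)) {x | s < g x}
      = ∫⁻ x in {x | s < g x} ∩ S, ENNReal.ofReal (w x) ∂μ := by
        rw [withDensity_apply _ hgs, Measure.restrict_restrict hgs]
    _ ≤ ∫⁻ x in {x | s < g x} ∩ S, ENNReal.ofReal (B / s) * ENNReal.ofReal (m x ^ (-a)) ∂μ :=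
        lintegral_mono_ae hwB
    _ ≤ ∫⁻ x in {x | m x < (A / s) ^ b⁻¹},
          ENNReal.ofReal (B / s) * ENNReal.ofReal (m x ^ (-a)) ∂μ :=
        lintegral_mono' (Measure.restrict_mono_ae hsub) le_rfl
    _ = ENNReal.ofReal (B / s) *
          ∫⁻ x in {x | m x < (A / s) ^ b⁻¹}, ENNReal.ofReal (m x ^ (-a)) ∂μ :=
        lintegral_const_mul' _ _ ENNReal.ofReal_ne_top

theorem weakLpBound_withDensity_of_le {g w : α → ℝ} {S : Set α} {A B : ℝ} (hmeas : Measurable m)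
    (hm0 : ∀ x, 0 ≤ m x) (hc : 0 ≤ c)
    (hm : ∀ ρ : ℝ, 0 < ρ → μ {x | m x < ρ} ≤ ENNReal.ofReal (c * ρ ^ N)) (ha : 0 < a)
    (haN : a < N) (hb : 0 < b) (hA : 0 < A) (hB : 0 ≤ B) (hS : MeasurableSet S) (hg : Measurable g)
    (hw : ∀ x ∈ S, 0 ≤ w x) (hgA : ∀ x ∈ S, 0 < m x → g x ≤ A * m x ^ (-b))
    (hgB : ∀ x ∈ S, 0 < m x → g x * w x ≤ B * m x ^ (-a)) :
    WeakLpBound ((μ.restrict S).withDensity fun x => ENNReal.ofReal (w x)) g (1 + (N - a) / b)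
      (B * ((1 + c / (N / a - 1)) * c ^ (1 - a / N)) * A ^ ((N - a) / b)) := by
  intro s hs
  have : 0 < N / a - 1 := sub_pos.2 ((one_lt_div ha).2 haN)
  have hpos : ∀ᵐ x ∂μ, 0 < m x := ae_pos_of_measure_lt_le (ha.trans haN) hm
  have hρ : ((A / s) ^ b⁻¹) ^ (N - a) = A ^ ((N - a) / b) * s ^ (-((N - a) / b)) := by
    rw [← Real.rpow_mul (by positivity), inv_mul_eq_div, Real.div_rpow hA.le hs.le,
      Real.rpow_neg hs.le, div_eq_mul_inv]
  refine (withDensity_lt_le_mul_setLIntegral hpos hb hA hB hS hg hw hgA hgB hs).trans ?_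
  grw [setLIntegral_rpow_neg_le hmeas hm0 hc hm ha haN (by positivity)]
  rw [← ENNReal.ofReal_mul (by positivity), hρ, neg_add, Real.rpow_add hs, Real.rpow_neg_one]
  refine (congrArg ENNReal.ofReal ?_).le
  ring

end PowerWeight

section PointwiseBounds

variable {r d e X Y z D γ H ε : ℝ}

theorem min_one_div_mul_rpow_neg_le (he : 0 < e) (hz : 0 < z) (hγ0 : 0 ≤ γ) (hγ1 : γ ≤ 1) :
    min 1 (e / z) * e ^ (-γ) ≤ z ^ (-γ) := by
  have hle : min 1 (e / z) ≤ (e / z) ^ γ := by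
    rcases le_total 1 (e / z) with h | h
    · exact (min_le_left _ _).trans (Real.one_le_rpow h hγ0)
    · exact (min_le_right _ _).trans (Real.self_le_rpow_of_le_one (by positivity) h hγ1)
  calc min 1 (e / z) * e ^ (-γ) ≤ (e / z) ^ γ * e ^ (-γ) := by gcongr
    _ = z ^ (-γ) := by
        rw [Real.div_rpow he.le hz.le, Real.rpow_neg he.le, Real.rpow_neg hz.le]
        field_simp

theorem min_one_mul_div_sq_le (hr : 0 < r) (hd : 0 < d) (he : 0 < e) (h : d ≤ e + r) :
    min 1 (d * e / r ^ 2) ≤ 4 * min 1 (e / max d r) := by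
  rw [mul_min_of_nonneg _ _ zero_le_four]
  refine le_min ((min_le_left _ _).trans (by norm_num)) ?_
  rcases le_total d r with hdr | hdr
  · rw [max_eq_right hdr]
    calc min 1 (d * e / r ^ 2) ≤ d * e / r ^ 2 := min_le_right _ _
      _ ≤ r * e / r ^ 2 := by gcongr
      _ = e / r := by field_simp
      _ ≤ 4 * (e / r) := le_mul_of_one_le_left (by positivity) (by norm_num)
  · rw [max_eq_left hdr]
    rcases le_total d (2 * e) with hde | hde
    · refine (min_le_left _ _).trans ?_
      rw [← mul_div_assoc, le_div_iff₀ hd]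
      linarith
    · have hd2r : d ≤ 2 * r := by linarith
      calc min 1 (d * e / r ^ 2) ≤ d * e / r ^ 2 := min_le_right _ _
        _ = d ^ 2 * (e / d) / r ^ 2 := by field_simp
        _ ≤ (2 * r) ^ 2 * (e / d) / r ^ 2 := by gcongr
        _ = 4 * (e / d) := by
            field_simp
            norm_num

/-- The factor `min 1 (d e / r²)` compensates the blow-up of `e^{-γ}` at the boundary because
`γ ≤ 1`. -/
theorem min_one_mul_div_sq_mul_rpow_neg_le (hr : 0 < r) (hd : 0 < d) (he : 0 < e) (hγ0 : 0 ≤ γ)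
    (hγ1 : γ ≤ 1) (h : d ≤ e + r) :
    min 1 (d * e / r ^ 2) * e ^ (-γ) ≤ 4 * max d r ^ (-γ) :=
  calc min 1 (d * e / r ^ 2) * e ^ (-γ) ≤ 4 * min 1 (e / max d r) * e ^ (-γ) := by
        gcongr
        exact min_one_mul_div_sq_le hr hd he h
    _ = 4 * (min 1 (e / max d r) * e ^ (-γ)) := mul_assoc _ _ _
    _ ≤ 4 * max d r ^ (-γ) := by
        gcongr
        exact min_one_div_mul_rpow_neg_le he (by positivity) hγ0 hγ1

theorem max_le_four_mul_of_sq_le_mul (hd : 0 < d) (he : 0 < e) (h : d ≤ e + r)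
    (hsq : r ^ 2 ≤ d * e) : max d r ≤ 4 * e := by
  have hd4 : d ≤ 4 * e := by
    by_contra! hlt
    have hlow : 3 / 4 * d ≤ r := by linarith
    have : (3 / 4 * d) ^ 2 ≤ r ^ 2 := by gcongr
    nlinarith
  have hr4 : r ^ 2 ≤ (4 * e) ^ 2 := hsq.trans (by nlinarith)
  exact max_le hd4 (le_of_sq_le_sq hr4 (by positivity))

theorem abs_log_min_one_sq_div_le (hr : 0 < r) (hd : 0 < d) (he : 0 < e) (hε : 0 < ε)
    (hdD : d ≤ D) (heD : e ≤ D) :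
    |Real.log (min 1 (r ^ 2 / (d * e)))| ≤ 2 * D ^ ε / ε * r ^ (-ε) := by
  have hD : 0 < D := hd.trans_le hdD
  rcases le_total 1 (r ^ 2 / (d * e)) with h1 | h1
  · rw [min_eq_left h1, Real.log_one, abs_zero]
    positivity
  · rw [min_eq_right h1, abs_of_nonpos (Real.log_nonpos (by positivity) h1), ← Real.log_inv,
      inv_div]
    calc Real.log (d * e / r ^ 2) ≤ Real.log ((D / r) ^ 2) := by
          rw [div_pow, sq D]
          gcongr
      _ = 2 * Real.log (D / r) := by
          rw [Real.log_pow]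
          norm_cast
      _ ≤ 2 * ((D / r) ^ ε / ε) := by
          gcongr
          exact Real.log_le_rpow_div (by positivity) hε
      _ = 2 * D ^ ε / ε * r ^ (-ε) := by
          rw [Real.div_rpow hD.le hr.le, Real.rpow_neg hr.le]
          ring

/-- The logarithm vanishes unless `r² < d e`, and in that range `e` dominates both `d` and `r`. -/
theorem abs_log_min_one_sq_div_mul_rpow_neg_le (hr : 0 < r) (hd : 0 < d) (he : 0 < e)
    (hγ0 : 0 ≤ γ) (hγ1 : γ ≤ 1) (hε : 0 < ε) (hdD : d ≤ D) (heD : e ≤ D) (h : d ≤ e + r) :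
    |Real.log (min 1 (r ^ 2 / (d * e)))| * e ^ (-γ) ≤
      8 * D ^ ε / ε * r ^ (-ε) * max d r ^ (-γ) := by
  have hD : 0 < D := hd.trans_le hdD
  rcases le_total (d * e) (r ^ 2) with hsq | hsq
  · rw [min_eq_left ((one_le_div (by positivity)).2 hsq), Real.log_one, abs_zero, zero_mul]
    positivity
  have he4 : e ^ (-γ) ≤ 4 * max d r ^ (-γ) := by
    have hmax : max d r / 4 ≤ e := by
      linarith [max_le_four_mul_of_sq_le_mul hd he h hsq]
    calc e ^ (-γ) ≤ (max d r / 4) ^ (-γ) :=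
          Real.rpow_le_rpow_of_nonpos (by positivity) hmax (neg_nonpos.2 hγ0)
      _ = 4 ^ γ * max d r ^ (-γ) := by
          rw [Real.div_rpow (by positivity) zero_le_four, Real.rpow_neg zero_le_four,
            div_inv_eq_mul, mul_comm]
      _ ≤ 4 * max d r ^ (-γ) := by
          gcongr
          exact Real.rpow_le_self_of_one_le (by norm_num) hγ1
  calc |Real.log (min 1 (r ^ 2 / (d * e)))| * e ^ (-γ)
      ≤ 2 * D ^ ε / ε * r ^ (-ε) * (4 * max d r ^ (-γ)) := by
        gcongr
        exact abs_log_min_one_sq_div_le hr hd he hε hdD heD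
    _ = 8 * D ^ ε / ε * r ^ (-ε) * max d r ^ (-γ) := by ring

theorem max_rpow_neg_mul_le (hd : 0 < d) (hD : 1 ≤ D) (hdD : d ≤ D) (hγ0 : 0 ≤ γ) (hγ1 : γ ≤ 1) :
    max d r ^ (-γ) * d ≤ D :=
  calc max d r ^ (-γ) * d ≤ d ^ (-γ) * d := by
        gcongr ?_ * d
        exact Real.rpow_le_rpow_of_nonpos hd (le_max_left _ _) (neg_nonpos.2 hγ0)
    _ = d ^ (1 - γ) := by rw [sub_eq_neg_add, Real.rpow_add_one hd.ne']
    _ ≤ D ^ (1 - γ) := Real.rpow_le_rpow hd.le hdD (sub_nonneg.2 hγ1)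
    _ ≤ D := Real.rpow_le_self_of_one_le hD (by linarith)

theorem sq_min_div_two_le (hr : 0 < r) (hX : 0 < X) (hY : 0 < Y) (h : Y ≤ X + r) :
    min r X ^ 2 / 2 ≤ r ^ 2 * min 1 (X * Y / r ^ 2) * X / Y := by
  have : 0 < min r X := lt_min hr hX
  have hmr : min r X ≤ r := min_le_left _ _
  have hmX : min r X ≤ X := min_le_right _ _
  rw [mul_min_of_nonneg _ _ (sq_nonneg r), mul_one, mul_div_cancel₀ _ (by positivity),
    le_div_iff₀ hY]
  rcases min_choice (r ^ 2) (X * Y) with hmin | hmin <;> rw [hmin]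
  · calc min r X ^ 2 / 2 * Y ≤ min r X ^ 2 / 2 * (X + r) := by gcongr
      _ = (min r X * min r X * X + min r X * r * min r X) / 2 := by ring
      _ ≤ (r * r * X + r * r * X) / 2 := by gcongr
      _ = r ^ 2 * X := by ring
  · calc min r X ^ 2 / 2 * Y ≤ min r X ^ 2 * Y := by
          gcongr
          linarith [sq_nonneg (min r X)]
      _ ≤ X ^ 2 * Y := by gcongr
      _ = X * Y * X := by ring

theorem rpow_neg_mul_min_one_rpow_neg_mul_le (hr : 0 < r) (hX : 0 < X) (hY : 0 < Y) (hH : 0 ≤ H)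
    (h : Y ≤ X + r) :
    r ^ (-(2 * H)) * min 1 (X * Y / r ^ 2) ^ (-H) * Y ^ H * X ^ (-H) ≤
      2 ^ H * min r X ^ (-(2 * H)) := by
  have hsq : ∀ u : ℝ, 0 < u → (u ^ 2) ^ (-H) = u ^ (-(2 * H)) := fun u hu => by
    rw [← Real.rpow_natCast_mul hu.le]
    norm_num
  have hm : 0 < min r X := lt_min hr hX
  calc r ^ (-(2 * H)) * min 1 (X * Y / r ^ 2) ^ (-H) * Y ^ H * X ^ (-H)
      = (r ^ 2 * min 1 (X * Y / r ^ 2) * X / Y) ^ (-H) := by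
        rw [Real.div_rpow (by positivity) hY.le, Real.mul_rpow (by positivity) hX.le,
          Real.mul_rpow (by positivity) (by positivity), hsq r hr, Real.rpow_neg hY.le,
          div_inv_eq_mul]
        ring
    _ ≤ (min r X ^ 2 / 2) ^ (-H) :=
        Real.rpow_le_rpow_of_nonpos (by positivity) (sq_min_div_two_le hr hX hY h)
          (neg_nonpos.2 hH)
    _ = 2 ^ H * min r X ^ (-(2 * H)) := by
        rw [Real.div_rpow (by positivity) zero_le_two, hsq _ hm, Real.rpow_neg zero_le_two,
          div_inv_eq_mul, mul_comm]

end PointwiseBounds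

section Kernel

variable {X : Type*} [PseudoMetricSpace X] {δ : X → ℝ} {o x y : X} {H γ ε D : ℝ}

/-- The first summand of the Green kernel times the density of `ω`, with `dist · o` for `|·|`, `δ`
for the distance to the boundary and `2H + 2` for the dimension `N`. -/
noncomputable def rieszPart (δ : X → ℝ) (o : X) (H γ : ℝ) (x y : X) : ℝ :=
  dist x y ^ (-(2 * H)) * min 1 (δ x * δ y / dist x y ^ 2) *
    min 1 (dist x o * dist y o / dist x y ^ 2) ^ (-H) * (dist y o ^ H * δ y ^ (-γ))

/-- The second summand of the Green kernel times the density of `ω`, in the notation of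
`rieszPart`. -/
noncomputable def logPart (δ : X → ℝ) (o : X) (H γ : ℝ) (x y : X) : ℝ :=
  (dist x o * dist y o) ^ (-H) * |Real.log (min 1 (dist x y ^ 2 / (δ x * δ y)))| *
    (dist y o ^ H * δ y ^ (-γ))

theorem le_add_dist_of_lipschitzWith_one (hδ : LipschitzWith 1 δ) (x y : X) :
    δ x ≤ δ y + dist x y := by
  simpa using hδ.le_add_mul x y

theorem exists_bound_of_isBounded {S : Set X} (hS : Bornology.IsBounded S) (hδ : LipschitzWith 1 δ)
    (o : X) : ∃ D : ℝ, 1 ≤ D ∧ (∀ x ∈ S, δ x ≤ D) ∧ ∀ x ∈ S, dist x o < D := by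
  obtain ⟨ρ, hρ⟩ := hS.subset_ball o
  refine ⟨|δ o| + |ρ| + 1, by linarith [abs_nonneg (δ o), abs_nonneg ρ], fun x hx => ?_,
    fun x hx => ?_⟩ <;>
  have hxρ : dist x o < ρ := hρ hx
  · linarith [le_add_dist_of_lipschitzWith_one hδ x o, le_abs_self (δ o), le_abs_self ρ]
  · linarith [abs_nonneg (δ o), le_abs_self ρ]

theorem measurable_rieszPart_add_logPart [MeasurableSpace X] [OpensMeasurableSpace X]
    [SecondCountableTopology X] (hδ : Measurable δ) (o : X) (H γ : ℝ) :
    Measurable (Function.uncurry fun x y => rieszPart δ o H γ x y + logPart δ o H γ x y) := by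
  simp only [Function.uncurry_def, rieszPart, logPart, ← Real.norm_eq_abs]
  fun_prop

theorem rieszPart_eq_mul : rieszPart δ o H γ x y =
    min 1 (δ x * δ y / dist x y ^ 2) * δ y ^ (-γ) *
      (dist x y ^ (-(2 * H)) * min 1 (dist x o * dist y o / dist x y ^ 2) ^ (-H) *
        dist y o ^ H) := by
  rw [rieszPart]
  ring

theorem logPart_eq_mul (hy : 0 < dist y o) : logPart δ o H γ x y =
    |Real.log (min 1 (dist x y ^ 2 / (δ x * δ y)))| * δ y ^ (-γ) * dist x o ^ (-H) := by
  have hcancel : dist y o ^ (-H) * dist y o ^ H = 1 := by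
    rw [← Real.rpow_add hy, neg_add_cancel, Real.rpow_zero]
  rw [logPart, Real.mul_rpow dist_nonneg dist_nonneg]
  linear_combination dist x o ^ (-H) * |Real.log (min 1 (dist x y ^ 2 / (δ x * δ y)))| *
    δ y ^ (-γ) * hcancel

theorem rieszPart_mul_weight_le_mul_rpow_neg (hδ : LipschitzWith 1 δ) (hδx : 0 < δ x)
    (hδy : 0 < δ y) (hδD : δ x ≤ D) (hD : 1 ≤ D) (hy : 0 < dist y o)
    (hm : 0 < min (dist x y) (dist x o)) (hH : 0 ≤ H) (hγ0 : 0 ≤ γ) (hγ1 : γ ≤ 1) :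
    rieszPart δ o H γ x y * (δ x * dist x o ^ (-H)) ≤
      4 * D * 2 ^ H * min (dist x y) (dist x o) ^ (-(2 * H)) := by
  obtain ⟨hr, hx⟩ := lt_min_iff.1 hm
  have hboundary : min 1 (δ x * δ y / dist x y ^ 2) * δ y ^ (-γ) * δ x ≤ 4 * D :=
    calc min 1 (δ x * δ y / dist x y ^ 2) * δ y ^ (-γ) * δ x
        ≤ 4 * max (δ x) (dist x y) ^ (-γ) * δ x := by
          gcongr ?_ * δ x
          exact min_one_mul_div_sq_mul_rpow_neg_le hr hδx hδy hγ0 hγ1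
            (le_add_dist_of_lipschitzWith_one hδ x y)
      _ = 4 * (max (δ x) (dist x y) ^ (-γ) * δ x) := mul_assoc _ _ _
      _ ≤ 4 * D := by
          gcongr
          exact max_rpow_neg_mul_le hδx hD hδD hγ0 hγ1
  have hhardy := rpow_neg_mul_min_one_rpow_neg_mul_le hr hx hy hH
    (by linarith [dist_triangle_left y o x] : dist y o ≤ dist x o + dist x y)
  rw [rieszPart_eq_mul, mul_assoc (4 * D)]
  refine le_of_eq_of_le ?_ (mul_le_mul hboundary hhardy (by positivity) (by positivity))
  ring

theorem rieszPart_le_mul_rpow_neg (hδ : LipschitzWith 1 δ) (hδx : 0 < δ x) (hδy : 0 < δ y)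
    (hxD : dist x o ≤ D) (hy : 0 < dist y o) (hm : 0 < min (dist x y) (dist x o))
    (hH : 0 ≤ H) (hγ0 : 0 ≤ γ) (hγ1 : γ ≤ 1) :
    rieszPart δ o H γ x y ≤
      4 * 2 ^ H * D ^ H * min (dist x y) (dist x o) ^ (-(2 * H + γ)) := by
  obtain ⟨hr, hx⟩ := lt_min_iff.1 hm
  set m := min (dist x y) (dist x o)
  have hboundary : min 1 (δ x * δ y / dist x y ^ 2) * δ y ^ (-γ) ≤ 4 * m ^ (-γ) := by
    refine (min_one_mul_div_sq_mul_rpow_neg_le hr hδx hδy hγ0 hγ1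
      (le_add_dist_of_lipschitzWith_one hδ x y)).trans ?_
    gcongr 4 * ?_
    exact Real.rpow_le_rpow_of_nonpos hm ((min_le_left _ _).trans (le_max_right _ _))
      (neg_nonpos.2 hγ0)
  have hcancel : dist x o ^ (-H) * dist x o ^ H = 1 := by
    rw [← Real.rpow_add hx, neg_add_cancel, Real.rpow_zero]
  have hhardy : dist x y ^ (-(2 * H)) * min 1 (dist x o * dist y o / dist x y ^ 2) ^ (-H) *
      dist y o ^ H ≤ 2 ^ H * m ^ (-(2 * H)) * D ^ H := by
    refine le_of_eq_of_le (by rw [mul_assoc _ (dist x o ^ (-H)), hcancel, mul_one]) <| mul_le_mul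
      (rpow_neg_mul_min_one_rpow_neg_mul_le hr hx hy hH (by linarith [dist_triangle_left y o x]))
      (Real.rpow_le_rpow hx.le hxD hH) (by positivity) (by positivity)
  calc rieszPart δ o H γ x y ≤ 4 * m ^ (-γ) * (2 ^ H * m ^ (-(2 * H)) * D ^ H) := by
        rw [rieszPart_eq_mul]
        gcongr
    _ = 4 * 2 ^ H * D ^ H * m ^ (-(2 * H + γ)) := by
        rw [neg_add, Real.rpow_add hm]
        ring

theorem logPart_mul_weight_le_mul_rpow_neg (hδ : LipschitzWith 1 δ) (hδx : 0 < δ x) (hδy : 0 < δ y)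
    (hδxD : δ x ≤ D) (hδyD : δ y ≤ D) (hD : 1 ≤ D) (hy : 0 < dist y o)
    (hm : 0 < min (dist x y) (dist x o)) (hH : 0 ≤ H) (hγ0 : 0 ≤ γ) (hγ1 : γ ≤ 1) (hε : 0 < ε) :
    logPart δ o H γ x y * (δ x * dist x o ^ (-H)) ≤
      8 * D ^ ε / ε * D * min (dist x y) (dist x o) ^ (-(2 * H + ε)) := by
  obtain ⟨hr, hx⟩ := lt_min_iff.1 hm
  set m := min (dist x y) (dist x o)
  have hrm : dist x y ^ (-ε) ≤ m ^ (-ε) :=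
    Real.rpow_le_rpow_of_nonpos hm (min_le_left _ _) (neg_nonpos.2 hε.le)
  have hxm : dist x o ^ (-H) ≤ m ^ (-H) :=
    Real.rpow_le_rpow_of_nonpos hm (min_le_right _ _) (neg_nonpos.2 hH)
  calc logPart δ o H γ x y * (δ x * dist x o ^ (-H))
      = |Real.log (min 1 (dist x y ^ 2 / (δ x * δ y)))| * δ y ^ (-γ) *
          δ x * (dist x o ^ (-H) * dist x o ^ (-H)) := by
        rw [logPart_eq_mul hy]
        ring
    _ ≤ 8 * D ^ ε / ε * dist x y ^ (-ε) * max (δ x) (dist x y) ^ (-γ) *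
          δ x * (dist x o ^ (-H) * dist x o ^ (-H)) := by
        gcongr ?_ * δ x * (dist x o ^ (-H) * dist x o ^ (-H))
        exact abs_log_min_one_sq_div_mul_rpow_neg_le hr hδx hδy hγ0 hγ1 hε hδxD hδyD
          (le_add_dist_of_lipschitzWith_one hδ x y)
    _ = 8 * D ^ ε / ε * dist x y ^ (-ε) * (max (δ x) (dist x y) ^ (-γ) * δ x) *
          (dist x o ^ (-H) * dist x o ^ (-H)) := by ring
    _ ≤ 8 * D ^ ε / ε * m ^ (-ε) * D * (m ^ (-H) * m ^ (-H)) := by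
        gcongr
        exact max_rpow_neg_mul_le hδx hD hδxD hγ0 hγ1
    _ = 8 * D ^ ε / ε * D * m ^ (-(2 * H + ε)) := by
        rw [show -(2 * H + ε) = -H + -H + -ε by ring, Real.rpow_add hm, Real.rpow_add hm]
        ring

theorem logPart_le_mul_rpow_neg (hδ : LipschitzWith 1 δ) (hδx : 0 < δ x) (hδy : 0 < δ y)
    (hδxD : δ x ≤ D) (hδyD : δ y ≤ D) (hy : 0 < dist y o) (hm : 0 < min (dist x y) (dist x o))
    (hH : 0 ≤ H) (hγ0 : 0 ≤ γ) (hγ1 : γ ≤ 1) (hε : 0 < ε) :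
    logPart δ o H γ x y ≤
      8 * D ^ ε / ε * min (dist x y) (dist x o) ^ (-(H + γ + ε)) := by
  obtain ⟨hr, hx⟩ := lt_min_iff.1 hm
  have hD : 0 < D := hδx.trans_le hδxD
  set m := min (dist x y) (dist x o)
  have hrm : dist x y ^ (-ε) ≤ m ^ (-ε) :=
    Real.rpow_le_rpow_of_nonpos hm (min_le_left _ _) (neg_nonpos.2 hε.le)
  have hmax : max (δ x) (dist x y) ^ (-γ) ≤ m ^ (-γ) :=
    Real.rpow_le_rpow_of_nonpos hm ((min_le_left _ _).trans (le_max_right _ _))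
      (neg_nonpos.2 hγ0)
  have hxm : dist x o ^ (-H) ≤ m ^ (-H) :=
    Real.rpow_le_rpow_of_nonpos hm (min_le_right _ _) (neg_nonpos.2 hH)
  calc logPart δ o H γ x y
      ≤ 8 * D ^ ε / ε * dist x y ^ (-ε) * max (δ x) (dist x y) ^ (-γ) * dist x o ^ (-H) := by
        rw [logPart_eq_mul hy]
        gcongr ?_ * dist x o ^ (-H)
        exact abs_log_min_one_sq_div_mul_rpow_neg_le hr hδx hδy hγ0 hγ1 hε hδxD hδyD
          (le_add_dist_of_lipschitzWith_one hδ x y)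
    _ ≤ 8 * D ^ ε / ε * m ^ (-ε) * m ^ (-γ) * m ^ (-H) := by gcongr
    _ = 8 * D ^ ε / ε * m ^ (-(H + γ + ε)) := by
        rw [show -(H + γ + ε) = -ε + -γ + -H by ring, Real.rpow_add hm, Real.rpow_add hm]
        ring

end Kernel

section Potential

variable {X : Type*} [PseudoMetricSpace X] [MeasurableSpace X] {μ : Measure X} {S : Set X}
  {δ : X → ℝ} {o : X} {N H γ c D : ℝ}

/-- The measure `d(x) |x|^{-H} dx` on `S`, in which the superlevel sets are measured. -/
noncomputable def hardyMeasure (μ : Measure X) (S : Set X) (δ : X → ℝ) (o : X) (H : ℝ) :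
    Measure X :=
  (μ.restrict S).withDensity fun x => ENNReal.ofReal (δ x * dist x o ^ (-H))

theorem measure_min_dist_lt_le (hc : 0 ≤ c)
    (hμ : ∀ (x : X) (r : ℝ), 0 < r → μ (ball x r) ≤ ENNReal.ofReal (c * r ^ N)) (y : X) {ρ : ℝ}
    (hρ : 0 < ρ) :
    μ {x | min (dist x y) (dist x o) < ρ} ≤ ENNReal.ofReal (2 * c * ρ ^ N) := by
  have hsub : {x | min (dist x y) (dist x o) < ρ} ⊆ ball y ρ ∪ ball o ρ :=
    fun x (hx : min (dist x y) (dist x o) < ρ) => (min_lt_iff.1 hx).imp mem_ball.2 mem_ball.2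
  calc μ {x | min (dist x y) (dist x o) < ρ} ≤ μ (ball y ρ) + μ (ball o ρ) :=
        (measure_mono hsub).trans (measure_union_le _ _)
    _ ≤ ENNReal.ofReal (c * ρ ^ N) + ENNReal.ofReal (c * ρ ^ N) :=
        add_le_add (hμ y ρ hρ) (hμ o ρ hρ)
    _ = ENNReal.ofReal (2 * c * ρ ^ N) := by
        rw [← ENNReal.ofReal_add (by positivity) (by positivity)]
        congr 1
        ring

variable [OpensMeasurableSpace X]

theorem isFiniteMeasure_hardyMeasure (hc : 0 ≤ c)
    (hμ : ∀ (x : X) (r : ℝ), 0 < r → μ (ball x r) ≤ ENNReal.ofReal (c * r ^ N)) (hH : 0 < H)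
    (hHN : H < N) (hS : MeasurableSet S) (hδD : ∀ x ∈ S, δ x ≤ D) (hD : 0 < D)
    (hoD : ∀ x ∈ S, dist x o < D) : IsFiniteMeasure (hardyMeasure μ S δ o H) := by
  refine isFiniteMeasure_withDensity (ne_of_lt ?_)
  calc ∫⁻ x in S, ENNReal.ofReal (δ x * dist x o ^ (-H)) ∂μ
      ≤ ∫⁻ x in S, ENNReal.ofReal D * ENNReal.ofReal (dist x o ^ (-H)) ∂μ :=
        setLIntegral_mono' hS fun x hx => by
          rw [← ENNReal.ofReal_mul hD.le]
          gcongr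
          exact hδD x hx
    _ ≤ ∫⁻ x in {x | dist x o < D}, ENNReal.ofReal D * ENNReal.ofReal (dist x o ^ (-H)) ∂μ :=
        lintegral_mono_set hoD
    _ = ENNReal.ofReal D * ∫⁻ x in {x | dist x o < D}, ENNReal.ofReal (dist x o ^ (-H)) ∂μ :=
        lintegral_const_mul' _ _ ENNReal.ofReal_ne_top
    _ < ⊤ := ENNReal.mul_lt_top ENNReal.ofReal_lt_top
        ((setLIntegral_rpow_neg_le (by fun_prop) (fun _ => dist_nonneg) hc (hμ o) hH hHN
          hD).trans_lt ENNReal.ofReal_lt_top)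

theorem exists_weakLpBound_rieszPart (hc : 0 ≤ c)
    (hμ : ∀ (x : X) (r : ℝ), 0 < r → μ (ball x r) ≤ ENNReal.ofReal (c * r ^ (2 * H + 2)))
    (hH : 0 < H) (hγ0 : 0 ≤ γ) (hγ1 : γ ≤ 1) (hS : MeasurableSet S) (ho : ∀ x ∈ S, 0 < dist x o)
    (hδ : LipschitzWith 1 δ) (hδ0 : ∀ x ∈ S, 0 < δ x) (hD : 1 ≤ D) (hδD : ∀ x ∈ S, δ x ≤ D)
    (hoD : ∀ x ∈ S, dist x o ≤ D) :
    ∃ A : ℝ, 0 ≤ A ∧ ∀ y ∈ S, WeakLpBound (hardyMeasure μ S δ o H)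
      (fun x => rieszPart δ o H γ x y) ((2 * H + 2 + γ) / (2 * H + γ)) A := by
  have hexp : (2 * H + 2 + γ) / (2 * H + γ) = 1 + (2 * H + 2 - 2 * H) / (2 * H + γ) := by
    field_simp
    ring
  have : 0 < (2 * H + 2) / (2 * H) - 1 := sub_pos.2 ((one_lt_div (by positivity)).2 (by simp))
  have hδm : Measurable δ := hδ.continuous.measurable
  rw [hexp]
  refine ⟨_, ?_, fun y hy => weakLpBound_withDensity_of_le
    (m := fun x => min (dist x y) (dist x o)) (A := 4 * 2 ^ H * D ^ H) (B := 4 * D * 2 ^ H)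
    (by fun_prop) (fun _ => by positivity) (by positivity)
    (fun ρ hρ => measure_min_dist_lt_le hc hμ y hρ) (by positivity) (by simp) (by positivity)
    (by positivity) (by positivity) hS (by unfold rieszPart; fun_prop)
    (fun x hx => mul_nonneg (hδ0 x hx).le (by positivity)) ?_ ?_⟩
  · positivity
  · exact fun x hx hm => rieszPart_le_mul_rpow_neg hδ (hδ0 x hx) (hδ0 y hy) (hoD x hx)
      (ho y hy) hm hH.le hγ0 hγ1
  · exact fun x hx hm => rieszPart_mul_weight_le_mul_rpow_neg hδ (hδ0 x hx) (hδ0 y hy) (hδD x hx) hD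
      (ho y hy) hm hH.le hγ0 hγ1

theorem exists_weakLpBound_logPart (hc : 0 ≤ c)
    (hμ : ∀ (x : X) (r : ℝ), 0 < r → μ (ball x r) ≤ ENNReal.ofReal (c * r ^ (2 * H + 2)))
    (hH : 0 < H) (hγ0 : 0 ≤ γ) (hγ1 : γ ≤ 1) (hS : MeasurableSet S) (ho : ∀ x ∈ S, 0 < dist x o)
    (hδ : LipschitzWith 1 δ) (hδ0 : ∀ x ∈ S, 0 < δ x) (hD : 1 ≤ D) (hδD : ∀ x ∈ S, δ x ≤ D) :
    ∃ A : ℝ, 0 ≤ A ∧ ∀ y ∈ S, WeakLpBound (hardyMeasure μ S δ o H)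
      (fun x => logPart δ o H γ x y) ((2 * H + 2 + γ) / (2 * H + γ)) A := by
  -- The choice of `ε` for which the power bounds give exactly the exponent of the Riesz part.
  obtain ⟨ε, hε⟩ : ∃ ε : ℝ, ε = 2 * H / (2 * H + 2 + γ) := ⟨_, rfl⟩
  have hε0 : 0 < ε := by
    rw [hε]
    positivity
  have hε1 : ε < 1 := by
    rw [hε, div_lt_one (by positivity)]
    linarith
  have hexp : (2 * H + 2 + γ) / (2 * H + γ)
      = 1 + (2 * H + 2 - (2 * H + ε)) / (H + γ + ε) := by
    have hεmul : ε * (2 * H + 2 + γ) = 2 * H := by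
      rw [hε]
      field_simp
    field_simp
    linear_combination hεmul
  have : 0 < (2 * H + 2) / (2 * H + ε) - 1 :=
    sub_pos.2 ((one_lt_div (by positivity)).2 (by linarith))
  have hδm : Measurable δ := hδ.continuous.measurable
  rw [hexp]
  refine ⟨_, ?_, fun y hy => weakLpBound_withDensity_of_le
    (m := fun x => min (dist x y) (dist x o)) (A := 8 * D ^ ε / ε) (B := 8 * D ^ ε / ε * D)
    (by fun_prop) (fun _ => by positivity) (by positivity)
    (fun ρ hρ => measure_min_dist_lt_le hc hμ y hρ) (by positivity) (by linarith) (by positivity)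
    (by positivity) (by positivity) hS
    (by unfold logPart; simp only [← Real.norm_eq_abs]; fun_prop)
    (fun x hx => mul_nonneg (hδ0 x hx).le (by positivity)) ?_ ?_⟩
  · positivity
  · exact fun x hx hm => logPart_le_mul_rpow_neg hδ (hδ0 x hx) (hδ0 y hy) (hδD x hx) (hδD y hy)
      (ho y hy) hm hH.le hγ0 hγ1 hε0
  · exact fun x hx hm => logPart_mul_weight_le_mul_rpow_neg hδ (hδ0 x hx) (hδ0 y hy) (hδD x hx)
      (hδD y hy) hD (ho y hy) hm hH.le hγ0 hγ1 hε0

theorem exists_weakLpBound_rieszPart_add_logPart (hc : 0 ≤ c)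
    (hμ : ∀ (x : X) (r : ℝ), 0 < r → μ (ball x r) ≤ ENNReal.ofReal (c * r ^ (2 * H + 2)))
    (hH : 0 < H) (hγ0 : 0 ≤ γ) (hγ1 : γ ≤ 1) (hS : MeasurableSet S) (ho : ∀ x ∈ S, 0 < dist x o)
    (hδ : LipschitzWith 1 δ) (hδ0 : ∀ x ∈ S, 0 < δ x) (hD : 1 ≤ D) (hδD : ∀ x ∈ S, δ x ≤ D)
    (hoD : ∀ x ∈ S, dist x o ≤ D) :
    ∃ A : ℝ, 0 ≤ A ∧ ∀ y ∈ S, WeakLpBound (hardyMeasure μ S δ o H)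
      (fun x => rieszPart δ o H γ x y + logPart δ o H γ x y)
      ((2 * H + 2 + γ) / (2 * H + γ)) A := by
  obtain ⟨A, hA, hriesz⟩ :=
    exists_weakLpBound_rieszPart hc hμ hH hγ0 hγ1 hS ho hδ hδ0 hD hδD hoD
  obtain ⟨B, hB, hlog⟩ := exists_weakLpBound_logPart hc hμ hH hγ0 hγ1 hS ho hδ hδ0 hD hδD
  exact ⟨_, by positivity, fun y hy => (hriesz y hy).add (hlog y hy) hA hB⟩

theorem weak_estimate_green_critical_general [SecondCountableTopology X] (hN : 2 < N)
    (hc : 0 ≤ c) (hμ : ∀ (x : X) (r : ℝ), 0 < r → μ (ball x r) ≤ ENNReal.ofReal (c * r ^ N))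
    (hS : MeasurableSet S) (hSb : Bornology.IsBounded S) (ho : ∀ x ∈ S, 0 < dist x o)
    (hδ : LipschitzWith 1 δ) (hδ0 : ∀ x ∈ S, 0 < δ x) (hγ0 : 0 ≤ γ) (hγ1 : γ ≤ 1) :
    ∃ C : ℝ, 0 < C ∧ ∀ (ω : Measure X) [SFinite ω], ∀ t : ℝ, 0 < t →
      (∫⁻ x in {x | x ∈ S ∧ ENNReal.ofReal t <
          ∫⁻ y in S, ENNReal.ofReal
            ((dist x y ^ (2 - N) * min 1 (δ x * δ y / dist x y ^ 2) *
                min 1 (dist x o * dist y o / dist x y ^ 2) ^ (-((N - 2) / 2)) +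
              (dist x o * dist y o) ^ (-((N - 2) / 2)) *
                |Real.log (min 1 (dist x y ^ 2 / (δ x * δ y)))|) *
              (dist y o ^ ((N - 2) / 2) * δ y ^ (-γ))) ∂ω},
        ENNReal.ofReal (δ x * dist x o ^ (-((N - 2) / 2))) ∂μ)
      ≤ ENNReal.ofReal (C * t ^ (-((N + γ) / (N + γ - 2)))) *
          ω S ^ ((N + γ) / (N + γ - 2)) := by
  obtain ⟨H, rfl⟩ : ∃ H, N = 2 * H + 2 := ⟨(N - 2) / 2, by ring⟩
  have hH : 0 < H := by linarith
  obtain ⟨D, hD, hδD, hoD⟩ := exists_bound_of_isBounded hSb hδ o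
  have := isFiniteMeasure_hardyMeasure hc hμ hH (by linarith) hS hδD (zero_lt_one.trans_le hD) hoD
  obtain ⟨A, hA, hweak⟩ := exists_weakLpBound_rieszPart_add_logPart hc hμ hH hγ0 hγ1 hS ho hδ hδ0
    hD hδD fun x hx => (hoD x hx).le
  have hq : 1 < (2 * H + 2 + γ) / (2 * H + γ) := (one_lt_div (by positivity)).2 (by linarith)
  have : 0 < (2 * H + 2 + γ) / (2 * H + γ) - 1 := sub_pos.2 hq
  have hk := measurable_rieszPart_add_logPart hδ.continuous.measurable o H γ
  refine ⟨(1 + A / ((2 * H + 2 + γ) / (2 * H + γ) - 1)) ^ ((2 * H + 2 + γ) / (2 * H + γ)),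
    by positivity, fun ω _ t ht => ?_⟩
  have hmain := measure_lt_lintegral_le_of_weakLpBound (ω := ω.restrict S) hk hq hA
    ((ae_restrict_mem hS).mono hweak) ht
  have hlevel : MeasurableSet {x | ENNReal.ofReal t <
      ∫⁻ y in S, ENNReal.ofReal (rieszPart δ o H γ x y + logPart δ o H γ x y) ∂ω} :=
    measurableSet_lt measurable_const hk.ennreal_ofReal.lintegral_prod_right'
  rw [hardyMeasure, withDensity_apply _ hlevel, Measure.restrict_restrict hlevel,
    Measure.restrict_apply_univ, inter_comm] at hmain
  have hexpK : 2 - (2 * H + 2) = -(2 * H) := by ring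
  have hexpH : (2 * H + 2 - 2) / 2 = H := by ring
  have hexpq : 2 * H + 2 + γ - 2 = 2 * H + γ := by ring
  simp only [hexpK, hexpH, hexpq, add_mul]
  exact hmain

end Potential

theorem infDist_frontier_pos_s12 {E : Type*} [NormedAddCommGroup E] [NormedSpace ℝ E] [Nontrivial E]
    {Ω : Set E} (hΩo : IsOpen Ω) (hΩb : Bornology.IsBounded Ω) {x : E} (hx : x ∈ Ω) :
    0 < infDist x (frontier Ω) := by
  have hne : (frontier Ω).Nonempty := by
    refine nonempty_frontier_iff.2 ⟨⟨x, hx⟩, fun huniv => ?_⟩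
    exact NormedSpace.unbounded_univ ℝ E (huniv ▸ hΩb)
  refine (isClosed_frontier.notMem_iff_infDist_pos hne).1 fun hmem => ?_
  exact (hΩo.frontier_eq ▸ hmem).2 hx

theorem addHaar_ball_eq_ofReal_mul_rpow {E : Type*} [NormedAddCommGroup E] [NormedSpace ℝ E]
    [FiniteDimensional ℝ E] [MeasurableSpace E] [BorelSpace E] (μ : Measure E)
    [μ.IsAddHaarMeasure] (x : E) {r : ℝ} (hr : 0 < r) :
    μ (ball x r) = ENNReal.ofReal (μ.real (ball 0 1) * r ^ (Module.finrank ℝ E : ℝ)) := by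
  rw [μ.addHaar_ball_of_pos x hr, ENNReal.ofReal_mul measureReal_nonneg, ofReal_measureReal,
    Real.rpow_natCast, mul_comm]

/-- Weak Lebesgue estimate for the Green-type potential of the critical Hardy
operator `Δ + ((N−2)/2)²|x|^{−2}` against the measure `|y|^H d(y)^{−γ} dω(y)`,
with respect to the weight `d(x)|x|^{−H}`, `H = (N−2)/2`, and exponent
`q = (N+γ)/(N+γ−2)`. -/
theorem weak_estimate_green_critical (N : ℕ) (hN : 2 < N)
    (Ω : Set (EuclideanSpace ℝ (Fin N)))
    (hΩo : IsOpen Ω) (hΩb : Bornology.IsBounded Ω) (h0 : (0 : EuclideanSpace ℝ (Fin N)) ∈ Ω)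
    (γ : ℝ) (hγ0 : 0 ≤ γ) (hγ1 : γ ≤ 1) :
    ∃ C : ℝ, 0 < C ∧ ∀ (ω : Measure (EuclideanSpace ℝ (Fin N))), IsFiniteMeasure ω →
      ∀ t : ℝ, 0 < t →
      (∫⁻ x in {x | x ∈ Ω \ {0} ∧ ENNReal.ofReal t <
          ∫⁻ y in Ω \ {0}, ENNReal.ofReal
            ((dist x y ^ (2 - (N : ℝ)) *
                min 1 (infDist x (frontier Ω) * infDist y (frontier Ω) / dist x y ^ 2) *
                (min 1 (‖x‖ * ‖y‖ / dist x y ^ 2)) ^ (-(((N : ℝ) - 2) / 2)) +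
              (‖x‖ * ‖y‖) ^ (-(((N : ℝ) - 2) / 2)) *
                |Real.log (min 1 (dist x y ^ 2 /
                  (infDist x (frontier Ω) * infDist y (frontier Ω))))|) *
              (‖y‖ ^ (((N : ℝ) - 2) / 2) * infDist y (frontier Ω) ^ (-γ))) ∂ω},
        ENNReal.ofReal (infDist x (frontier Ω) * ‖x‖ ^ (-(((N : ℝ) - 2) / 2))))
      ≤ ENNReal.ofReal (C * t ^ (-(((N : ℝ) + γ) / ((N : ℝ) + γ - 2)))) *
          (ω (Ω \ {0})) ^ (((N : ℝ) + γ) / ((N : ℝ) + γ - 2)) := by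
  have : Nonempty (Fin N) := ⟨⟨0, by omega⟩⟩
  obtain ⟨C, hC, hest⟩ := weak_estimate_green_critical_general (N := (N : ℝ)) (μ := volume)
    (o := 0) (mod_cast hN) measureReal_nonneg
    (fun x r hr => by
      rw [addHaar_ball_eq_ofReal_mul_rpow volume x hr, finrank_euclideanSpace_fin])
    (hΩo.measurableSet.diff (measurableSet_singleton 0)) (hΩb.subset sdiff_subset)
    (fun x hx => dist_pos.2 hx.2)
    (lipschitz_infDist_pt (frontier Ω)) (fun x hx => infDist_frontier_pos_s12 hΩo hΩb hx.1) hγ0 hγ1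
  exact ⟨C, hC, fun ω _ t ht => by simpa only [dist_zero_right] using hest ω t ht⟩
end

section
/- Let N > 2 be an integer, Ω ⊂ ℝ^N a nonempty bounded open set with 0 ∈ Ω, let a ≥ 0, 0 ≤ κ ≤ a and 0 ≤ γ ≤ 1, and set p = min{ (N+κ)/(N+κ−2), (N+γ)/(N+γ−2) }. Then there exists C = C(N, Ω, a, κ, γ) > 0 such that for every finite positive Borel measure ω on Ω ∖ {0} and every λ > 0: ∫_{{x ∈ Ω∖{0} : U(x) > λ}} d(x)|x|^{a} dx ≤ C λ^{−p} ω(Ω∖{0})^p, where U(x) = ∫_{Ω∖{0}} |x−y|^{2−N} · min{1, d(x)d(y)/|x−y|^2} · ( min{1, |x||y|/|x−y|^2} )^{a} · |y|^{−κ} d(y)^{−γ} dω(y). -/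
open MeasureTheory Metric Set

/-!
Write `ν = d(x) |x|^a dx`, `q = max κ γ`, and let `K` be the kernel of the potential `U`. Since
the boundary and the singular set are a positive distance apart, at each `y` only one of the two
singular weights is large, and it is absorbed by the corresponding factor `min {1, ·}`. This gives
`K(x, y) ≤ C |x - y|^(2 - N - q)`; spending the factor `min {1, ·}` against the density of `ν`
instead gives `d(x) |x|^a K(x, y) ≤ C |x - y|^(2 - N)`.

Splitting at the radius `R` with `R^(N + q) = ν(E)` (second bound inside the ball, first bound
outside) yields `∫_E K(·, y) dν ≤ C ν(E)^(2 / (N + q))` uniformly in `y`. For `E = {U > t}`,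
Tonelli's theorem turns this into `t ν(E) ≤ C ω(Ω ∖ {0}) ν(E)^(2 / (N + q))`, and cancelling the
power of `ν(E)` leaves the exponent `(N + q) / (N + q - 2)`. The origin enters only through the
distance to it, so any nonempty compact subset of `Ω` can take its place.
-/

open scoped ENNReal NNReal

theorem le_rpow_of_mul_le_mul_rpow {v A t : ℝ≥0∞} {θ : ℝ} (hθ : θ < 1) (hv : v ≠ ∞)
    (ht₀ : t ≠ 0) (ht : t ≠ ∞) (h : t * v ≤ A * v ^ θ) : v ≤ (A / t) ^ (1 - θ)⁻¹ := by
  rcases eq_or_ne v 0 with rfl | hv₀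
  · exact zero_le
  have hpow : v ^ (1 - θ) ≤ A / t := by
    rw [ENNReal.rpow_sub _ _ hv₀ hv, ENNReal.rpow_one]
    refine ENNReal.div_le_of_le_mul ?_
    rw [← ENNReal.mul_div_right_comm]
    exact (ENNReal.le_div_iff_mul_le (.inl ht₀) (.inl ht)).2 (by rwa [mul_comm])
  rwa [← ENNReal.rpow_inv_le_iff (inv_pos.2 (sub_pos.2 hθ)), inv_inv]

theorem setLIntegral_le_mul_measure_rpow {X : Type*} [PseudoMetricSpace X] [MeasurableSpace X]
    [OpensMeasurableSpace X] {ν : Measure X} {α m : ℝ} (hm : 0 < m)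
    {C₁ C₂ : ℝ≥0∞} {k : X → ℝ≥0∞} {y : X} {E : Set X} (hE : MeasurableSet E) (hνE : ν E ≠ ∞)
    (hball : ∀ R : ℝ≥0, ∫⁻ x in E ∩ ball y R, k x ∂ν ≤ C₁ * (R : ℝ≥0∞) ^ α)
    (hdecay : ∀ R : ℝ≥0, 0 < R → ∀ x ∈ E \ ball y R, k x ≤ C₂ * (R : ℝ≥0∞) ^ (α - m)) :
    ∫⁻ x in E, k x ∂ν ≤ (C₁ + C₂) * ν E ^ (α / m) := by
  rcases eq_or_ne (ν E) 0 with hE₀ | hE₀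
  · simp [Measure.restrict_eq_zero.2 hE₀]
  -- `R ^ m = ν E` makes the two pieces of the same order.
  obtain ⟨R, hR⟩ : ∃ R : ℝ≥0, (R : ℝ≥0∞) = ν E ^ m⁻¹ :=
    WithTop.ne_top_iff_exists.1 (ENNReal.rpow_ne_top_of_ne_zero hE₀ hνE)
  have hνR : ν E = (R : ℝ≥0∞) ^ m := by rw [hR, ENNReal.rpow_inv_rpow hm.ne']
  have hR₀ : (R : ℝ≥0∞) ≠ 0 := hR ▸ (ENNReal.rpow_pos hE₀.bot_lt hνE).ne'
  have houter : ∫⁻ x in E \ ball y R, k x ∂ν ≤ C₂ * (R : ℝ≥0∞) ^ α :=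
    calc ∫⁻ x in E \ ball y R, k x ∂ν
        ≤ ∫⁻ _ in E \ ball y R, C₂ * (R : ℝ≥0∞) ^ (α - m) ∂ν :=
          setLIntegral_mono' (hE.diff measurableSet_ball)
            (hdecay R (pos_iff_ne_zero.2 (ENNReal.coe_ne_zero.1 hR₀)))
      _ ≤ C₂ * (R : ℝ≥0∞) ^ (α - m) * ν E := by
          rw [setLIntegral_const]; gcongr; exact sdiff_subset
      _ = C₂ * (R : ℝ≥0∞) ^ α := by
          rw [hνR, mul_assoc, ← ENNReal.rpow_add _ _ hR₀ ENNReal.coe_ne_top, sub_add_cancel]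
  calc ∫⁻ x in E, k x ∂ν
      = ∫⁻ x in E ∩ ball y R, k x ∂ν + ∫⁻ x in E \ ball y R, k x ∂ν :=
        (lintegral_inter_add_sdiff k E measurableSet_ball).symm
    _ ≤ C₁ * (R : ℝ≥0∞) ^ α + C₂ * (R : ℝ≥0∞) ^ α := add_le_add (hball R) houter
    _ = (C₁ + C₂) * ν E ^ (α / m) := by
        rw [← add_mul, hνR, ← ENNReal.rpow_mul, mul_div_cancel₀ _ hm.ne']

theorem measure_superlevel_lintegral_le {X Y : Type*} [MeasurableSpace X] [MeasurableSpace Y]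
    {ν : Measure X} [SFinite ν] {ω : Measure Y} [SFinite ω] {K : X → Y → ℝ≥0∞}
    (hK : Measurable (Function.uncurry K)) {S : Set X} (hS : MeasurableSet S) (hνS : ν S ≠ ∞)
    {C t : ℝ≥0∞} (ht₀ : t ≠ 0) (ht : t ≠ ∞) {θ : ℝ} (hθ : θ < 1)
    (hKE : ∀ E ⊆ S, MeasurableSet E → ∀ᵐ y ∂ω, ∫⁻ x in E, K x y ∂ν ≤ C * ν E ^ θ) :
    ν {x | x ∈ S ∧ t < ∫⁻ y, K x y ∂ω} ≤ (C * ω univ / t) ^ (1 - θ)⁻¹ := by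
  set E : Set X := {x | x ∈ S ∧ t < ∫⁻ y, K x y ∂ω}
  have hES : E ⊆ S := fun _ hx => hx.1
  have hE : MeasurableSet E := hS.inter (measurableSet_lt measurable_const hK.lintegral_prod_right)
  refine le_rpow_of_mul_le_mul_rpow hθ (measure_ne_top_of_subset hES hνS) ht₀ ht ?_
  calc t * ν E = ∫⁻ _ in E, t ∂ν := (setLIntegral_const _ _).symm
    _ ≤ ∫⁻ x in E, ∫⁻ y, K x y ∂ω ∂ν := setLIntegral_mono' hE fun _ hx => hx.2.le
    _ = ∫⁻ y, ∫⁻ x in E, K x y ∂ν ∂ω := lintegral_lintegral_swap hK.aemeasurable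
    _ ≤ ∫⁻ _, C * ν E ^ θ ∂ω := lintegral_mono_ae (hKE E hES hE)
    _ = C * ω univ * ν E ^ θ := by rw [lintegral_const, mul_right_comm]

theorem setIntegral_ball_norm_rpow_s13 {E : Type*} [NormedAddCommGroup E] [NormedSpace ℝ E]
    [FiniteDimensional ℝ E] [MeasurableSpace E] [BorelSpace E] (μ : Measure E)
    [μ.IsAddHaarMeasure] (α : ℝ) {R : ℝ} (hR : 0 < R) :
    ∫ x in ball (0 : E) R, ‖x‖ ^ (α - Module.finrank ℝ E) ∂μ
      = R ^ α * ∫ x in ball (0 : E) 1, ‖x‖ ^ (α - Module.finrank ℝ E) ∂μ := by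
  set n := Module.finrank ℝ E
  have h := Measure.setIntegral_comp_smul_of_pos μ (fun x : E => ‖x‖ ^ (α - n)) (ball 0 1) hR
  rw [smul_unitBall_of_pos hR] at h
  simp_rw [norm_smul, Real.norm_of_nonneg hR.le, Real.mul_rpow hR.le (norm_nonneg _)] at h
  rw [integral_const_mul, eq_inv_smul_iff₀ (by positivity), smul_eq_mul, ← mul_assoc,
    ← Real.rpow_natCast, ← Real.rpow_add hR, add_sub_cancel] at h
  exact h.symm

theorem exists_setLIntegral_ball_dist_rpow_le {E : Type*} [NormedAddCommGroup E] [NormedSpace ℝ E]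
    [FiniteDimensional ℝ E] [MeasurableSpace E] [BorelSpace E] (μ : Measure E)
    [μ.IsAddHaarMeasure] {α : ℝ} (hα : 0 < α) (hE : 0 < Module.finrank ℝ E) :
    ∃ B : ℝ≥0, ∀ (y : E) (R : ℝ≥0),
      ∫⁻ x in ball y R, ENNReal.ofReal (dist x y ^ (α - Module.finrank ℝ E)) ∂μ
        ≤ B * (R : ℝ≥0∞) ^ α := by
  set n := Module.finrank ℝ E
  have hint (R : ℝ) : IntegrableOn (fun x : E => ‖x‖ ^ (α - n)) (ball 0 R) μ := by
    refine integrableOn_ball_of_norm_le_rpow (C := 1) (α := n - α) hE (by linarith)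
      (.of_forall fun x => ?_) (measurable_norm.pow_const _).aestronglyMeasurable
    rw [one_mul, neg_sub, Real.norm_of_nonneg (by positivity)]
  refine ⟨(∫ x in ball (0 : E) 1, ‖x‖ ^ (α - n) ∂μ).toNNReal, fun y R => ?_⟩
  rcases eq_zero_or_pos R with rfl | hR
  · simp
  have hR' : (0 : ℝ) < R := hR
  have htranslate : ∫⁻ x in ball y R, ENNReal.ofReal (dist x y ^ (α - n)) ∂μ
      = ∫⁻ x in ball 0 R, ENNReal.ofReal (‖x‖ ^ (α - n)) ∂μ := by
    have hpre : (· - y) ⁻¹' ball 0 R = ball y R := by ext x; simp [dist_eq_norm]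
    simpa only [hpre, dist_eq_norm] using
      (measurePreserving_sub_right μ y).setLIntegral_comp_preimage
        (measurableSet_ball (x := 0) (ε := (R : ℝ)))
        (measurable_norm.pow_const (α - n)).ennreal_ofReal
  rw [htranslate, ← ofReal_integral_eq_lintegral_ofReal (hint R)
      (.of_forall fun x => by positivity), setIntegral_ball_norm_rpow_s13 μ α hR', mul_comm,
    ENNReal.ofReal_mul' (by positivity), ← ENNReal.ofReal_rpow_of_pos hR',
    ENNReal.ofReal_coe_nnreal]
  rfl

theorem rpow_mul_rpow_neg_le_of_le_mul {u v s e b : ℝ} (hu₀ : 0 ≤ u) (hu₁ : u ≤ 1)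
    (hv : 0 ≤ v) (hs : 0 ≤ s) (huv : u ≤ s * v) (hb : 0 ≤ b) (hbe : b ≤ e) :
    u ^ e * v ^ (-b) ≤ s ^ b :=
  calc u ^ e * v ^ (-b) ≤ (s * v) ^ b * v ^ (-b) := by
        gcongr
        exact (Real.rpow_le_rpow_of_exponent_ge' hu₀ hu₁ hb hbe).trans (by gcongr)
    _ = s ^ b * (v ^ b * (v ^ b)⁻¹) := by
        rw [Real.mul_rpow hs hv, Real.rpow_neg hv, mul_assoc]
    _ ≤ s ^ b := mul_le_of_le_one_right (by positivity) mul_inv_le_one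

theorem min_one_div_sq_mul_dist_le {A B r : ℝ} (hB : 0 ≤ B) (hr : 0 ≤ r)
    (h : A ≤ B + r) : min 1 (A * B / r ^ 2) * r ≤ 2 * B := by
  rcases le_or_gt r B with hrB | hrB
  · calc min 1 (A * B / r ^ 2) * r ≤ 1 * r := by gcongr; exact min_le_left _ _
      _ ≤ 2 * B := by linarith
  · have hr' : 0 < r := hB.trans_lt hrB
    calc min 1 (A * B / r ^ 2) * r ≤ (2 * r) * B / r ^ 2 * r := by
          gcongr
          exact (min_le_right _ _).trans (by gcongr; linarith)
      _ = 2 * B := by field_simp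

theorem min_one_div_sq_mul_left_le {A B r : ℝ} (hA : 0 ≤ A) (hB : 0 ≤ B)
    (h : A ≤ B + r) : min 1 (A * B / r ^ 2) * A ≤ 4 * B := by
  rcases le_or_gt r B with hrB | hrB
  · calc min 1 (A * B / r ^ 2) * A ≤ 1 * A := by gcongr; exact min_le_left _ _
      _ ≤ 4 * B := by linarith
  · have hr : 0 < r := hB.trans_lt hrB
    have hAr : A ≤ 2 * r := by linarith
    calc min 1 (A * B / r ^ 2) * A ≤ (2 * r) * B / r ^ 2 * (2 * r) := by
          gcongr
          exact (min_le_right _ _).trans (by gcongr)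
      _ = 4 * B := by field_simp; ring

theorem two_div_rpow_le {r D b q : ℝ} (hr : 0 < r) (hrD : r ≤ D) (hbq : b ≤ q) :
    (2 / r) ^ b ≤ 2 ^ b * D ^ (q - b) * r ^ (-q) :=
  calc (2 / r) ^ b = 2 ^ b * r ^ (q - b) * r ^ (-q) := by
        rw [Real.div_rpow zero_le_two hr.le, mul_assoc, ← Real.rpow_add hr, div_eq_mul_inv,
          ← Real.rpow_neg hr.le]
        ring_nf
    _ ≤ 2 ^ b * D ^ (q - b) * r ^ (-q) := by
        have := sub_nonneg.2 hbq
        gcongr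

/-- The factor by which a set `A` lowers the Green function bound, merged with a singular weight:
for `δ = infDist · A` this is `min {1, δ(x) δ(y) / |x - y|²} ^ e * δ(y) ^ (-b)`. Both the boundary
(`e = 1`) and the singular set of the potential (`e = a`) enter the kernel in this form. -/
noncomputable def singularFactor {X : Type*} [PseudoMetricSpace X] (δ : X → ℝ) (e b : ℝ)
    (x y : X) : ℝ :=
  min 1 (δ x * δ y / dist x y ^ 2) ^ e * δ y ^ (-b)

section SingularFactor

variable {X : Type*} [PseudoMetricSpace X] {δ : X → ℝ} {e b : ℝ}

theorem singularFactor_nonneg (hδ₀ : ∀ x, 0 ≤ δ x) (x y : X) : 0 ≤ singularFactor δ e b x y := by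
  have hx := hδ₀ x
  have hy := hδ₀ y
  unfold singularFactor
  positivity

theorem measurable_uncurry_singularFactor [SecondCountableTopology X] [MeasurableSpace X]
    [OpensMeasurableSpace X] (hδ : Measurable δ) :
    Measurable (Function.uncurry (singularFactor δ e b)) := by
  unfold singularFactor Function.uncurry
  fun_prop

theorem singularFactor_le_of_le (hδ₀ : ∀ x, 0 ≤ δ x) (hb : 0 ≤ b) (hbe : b ≤ e) {c : ℝ}
    (hc : 0 < c) (x : X) {y : X} (hy : c ≤ δ y) : singularFactor δ e b x y ≤ c⁻¹ ^ b := by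
  have hx₀ := hδ₀ x
  have hy₀ := hδ₀ y
  refine rpow_mul_rpow_neg_le_of_le_mul (by positivity) (min_le_left _ _) hy₀ (by positivity) ?_
    hb hbe
  exact (min_le_left _ _).trans (by rwa [inv_mul_eq_div, one_le_div hc])

theorem singularFactor_le_dist (hδ₀ : ∀ x, 0 ≤ δ x) (hδ : LipschitzWith 1 δ) (hb : 0 ≤ b)
    (hbe : b ≤ e) {x y : X} (hxy : 0 < dist x y) :
    singularFactor δ e b x y ≤ (2 / dist x y) ^ b := by
  have hx₀ := hδ₀ x
  have hy₀ := hδ₀ y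
  refine rpow_mul_rpow_neg_le_of_le_mul (by positivity) (min_le_left _ _) hy₀ (by positivity) ?_
    hb hbe
  rw [div_mul_eq_mul_div, le_div_iff₀ hxy]
  exact min_one_div_sq_mul_dist_le hy₀ hxy.le (by simpa using hδ.le_add_mul x y)

theorem rpow_mul_singularFactor_le (hδ₀ : ∀ x, 0 ≤ δ x) (hδ : LipschitzWith 1 δ) (hb : 0 ≤ b)
    (hbe : b ≤ e) {L : ℝ} (hL : 0 < L) {x : X} (hx : δ x ≤ L) (y : X) :
    δ x ^ e * singularFactor δ e b x y ≤ L ^ e * (4 / L) ^ b := by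
  have hx₀ := hδ₀ x
  have hy₀ := hδ₀ y
  set u := min 1 (δ x * δ y / dist x y ^ 2) with hu
  have hu₀ : 0 ≤ u := by positivity
  have huL : u * δ x / L ≤ 1 := by
    rw [div_le_one hL]
    exact (mul_le_of_le_one_left hx₀ (min_le_left _ _)).trans hx
  have huδ : u * δ x / L ≤ 4 / L * δ y := by
    rw [div_mul_eq_mul_div]
    gcongr ?_ / L
    exact min_one_div_sq_mul_left_le hx₀ hy₀ (by simpa using hδ.le_add_mul x y)
  calc δ x ^ e * singularFactor δ e b x y = L ^ e * ((u * δ x / L) ^ e * δ y ^ (-b)) := by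
        rw [singularFactor, ← hu, Real.div_rpow (by positivity) hL.le, Real.mul_rpow hu₀ hx₀]
        field_simp
    _ ≤ L ^ e * (4 / L) ^ b := by
        gcongr
        exact rpow_mul_rpow_neg_le_of_le_mul (by positivity) huL hy₀ (by positivity) huδ hb hbe

variable {ρ : X → ℝ} {e₁ b₁ e₂ b₂ q : ℝ}

theorem rpow_mul_rpow_mul_singularFactor_mul_le (hδ₀ : ∀ x, 0 ≤ δ x) (hδ : LipschitzWith 1 δ)
    (hρ₀ : ∀ x, 0 ≤ ρ x) (hρ : LipschitzWith 1 ρ) (hb₁ : 0 ≤ b₁) (hbe₁ : b₁ ≤ e₁) (hb₂ : 0 ≤ b₂)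
    (hbe₂ : b₂ ≤ e₂) {L₁ L₂ : ℝ} (hL₁ : 0 < L₁) (hL₂ : 0 < L₂) {x : X} (hδx : δ x ≤ L₁)
    (hρx : ρ x ≤ L₂) (y : X) :
    δ x ^ e₁ * ρ x ^ e₂ * (singularFactor δ e₁ b₁ x y * singularFactor ρ e₂ b₂ x y)
      ≤ L₁ ^ e₁ * (4 / L₁) ^ b₁ * (L₂ ^ e₂ * (4 / L₂) ^ b₂) := by
  rw [mul_mul_mul_comm]
  exact mul_le_mul (rpow_mul_singularFactor_le hδ₀ hδ hb₁ hbe₁ hL₁ hδx y)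
    (rpow_mul_singularFactor_le hρ₀ hρ hb₂ hbe₂ hL₂ hρx y)
    (mul_nonneg (Real.rpow_nonneg (hρ₀ x) _) (singularFactor_nonneg hρ₀ x y)) (by positivity)

theorem singularFactor_mul_le (hδ₀ : ∀ x, 0 ≤ δ x) (hρ₀ : ∀ x, 0 ≤ ρ x)
    (hρ : LipschitzWith 1 ρ) (hb₁ : 0 ≤ b₁) (hbe₁ : b₁ ≤ e₁) (hb₂ : 0 ≤ b₂) (hbe₂ : b₂ ≤ e₂)
    (hbq : b₂ ≤ q) {c D : ℝ} (hc : 0 < c) {x y : X} (hy : c ≤ δ y)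
    (hxy : 0 < dist x y) (hD : dist x y ≤ D) :
    singularFactor δ e₁ b₁ x y * singularFactor ρ e₂ b₂ x y
      ≤ c⁻¹ ^ b₁ * (2 ^ b₂ * D ^ (q - b₂)) * dist x y ^ (-q) := by
  rw [mul_assoc]
  exact mul_le_mul (singularFactor_le_of_le hδ₀ hb₁ hbe₁ hc x hy)
    ((singularFactor_le_dist hρ₀ hρ hb₂ hbe₂ hxy).trans (two_div_rpow_le hxy hD hbq))
    (singularFactor_nonneg hρ₀ x y) (by positivity)

theorem exists_singularFactor_mul_le (hδ₀ : ∀ x, 0 ≤ δ x) (hδ : LipschitzWith 1 δ)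
    (hρ₀ : ∀ x, 0 ≤ ρ x) (hρ : LipschitzWith 1 ρ) (hb₁ : 0 ≤ b₁) (hbe₁ : b₁ ≤ e₁) (hb₂ : 0 ≤ b₂)
    (hbe₂ : b₂ ≤ e₂) (hbq₁ : b₁ ≤ q) (hbq₂ : b₂ ≤ q) {S : Set X} (hS : Bornology.IsBounded S)
    {c : ℝ} (hc : 0 < c) (hcS : ∀ y ∈ S, c ≤ δ y + ρ y) :
    ∃ C : ℝ, 0 < C ∧ ∀ x ∈ S, ∀ y ∈ S, 0 < dist x y →
      singularFactor δ e₁ b₁ x y * singularFactor ρ e₂ b₂ x y ≤ C * dist x y ^ (-q) := by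
  obtain ⟨D, hD₀, hD⟩ : ∃ D > 0, ∀ x ∈ S, ∀ y ∈ S, dist x y ≤ D :=
    ⟨diam S + 1, by positivity, fun x hx y hy => (dist_le_diam_of_mem hS hx hy).trans (by simp)⟩
  set C₁ := (c / 2)⁻¹ ^ b₁ * (2 ^ b₂ * D ^ (q - b₂))
  set C₂ := (c / 2)⁻¹ ^ b₂ * (2 ^ b₁ * D ^ (q - b₁))
  have : 0 < C₁ := by positivity
  have : 0 < C₂ := by positivity
  refine ⟨max C₁ C₂, by positivity, fun x hx y hy hxy => ?_⟩
  rcases le_total (c / 2) (δ y) with hδy | hδy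
  · refine (singularFactor_mul_le hδ₀ hρ₀ hρ hb₁ hbe₁ hb₂ hbe₂ hbq₂ (half_pos hc) hδy hxy
      (hD x hx y hy)).trans ?_
    gcongr
    exact le_max_left _ _
  · have hρy : c / 2 ≤ ρ y := by linarith [hcS y hy]
    rw [mul_comm]
    refine (singularFactor_mul_le hρ₀ hδ₀ hδ hb₂ hbe₂ hb₁ hbe₁ hbq₁ (half_pos hc) hρy hxy
      (hD x hx y hy)).trans ?_
    gcongr
    exact le_max_right _ _

end SingularFactor

section Superlevel

variable {α n q : ℝ}

theorem ofReal_rpow_mul_le {r g : ℝ} {R C : ℝ≥0} (hαn : α ≤ n + q) (hR : 0 < R) (hRr : R ≤ r)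
    (hg : g ≤ C * r ^ (-q)) :
    ENNReal.ofReal (r ^ (α - n) * g) ≤ C * (R : ℝ≥0∞) ^ (α - (n + q)) := by
  have hR' : (0 : ℝ) < R := hR
  have hr : 0 < r := hR'.trans_le hRr
  rw [← ENNReal.ofReal_coe_nnreal, ← ENNReal.ofReal_coe_nnreal, ENNReal.ofReal_rpow_of_pos hR',
    ← ENNReal.ofReal_mul C.coe_nonneg]
  refine ENNReal.ofReal_le_ofReal ?_
  calc r ^ (α - n) * g ≤ r ^ (α - n) * (C * r ^ (-q)) := by gcongr
    _ = C * r ^ (α - (n + q)) := by rw [mul_left_comm, ← Real.rpow_add hr]; ring_nf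
    _ ≤ C * R ^ (α - (n + q)) := by
        gcongr ?_ * ?_
        exact Real.rpow_le_rpow_of_nonpos hR' hRr (sub_nonpos.2 hαn)

variable {X : Type*} [PseudoMetricSpace X] [MeasurableSpace X] [OpensMeasurableSpace X]
  {μ : Measure X} {B C₁ C₂ : ℝ≥0} {W : X → ℝ}

theorem setLIntegral_withDensity_dist_rpow_mul_le (hαn : α ≤ n + q) (hnq : 0 < n + q)
    (hμ : ∀ (y : X) (R : ℝ≥0),
      ∫⁻ x in ball y R, ENNReal.ofReal (dist x y ^ (α - n)) ∂μ ≤ B * (R : ℝ≥0∞) ^ α)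
    (hW : Measurable W) (hW₀ : ∀ x, 0 ≤ W x) {k : X → ℝ} (hk : Measurable k) {y : X} {E : Set X}
    (hE : MeasurableSet E) (hWE : μ.withDensity (fun x => ENNReal.ofReal (W x)) E ≠ ∞)
    (hkdist : ∀ x ∈ E, 0 < dist x y → k x ≤ C₁ * dist x y ^ (-q))
    (hWk : ∀ x ∈ E, W x * k x ≤ C₂) :
    ∫⁻ x in E, ENNReal.ofReal (dist x y ^ (α - n) * k x)
        ∂μ.withDensity (fun x => ENNReal.ofReal (W x))
      ≤ (C₂ * B + C₁) * μ.withDensity (fun x => ENNReal.ofReal (W x)) E ^ (α / (n + q)) := by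
  have hpoint {x : X} (hx : x ∈ E) :
      ENNReal.ofReal (W x) * ENNReal.ofReal (dist x y ^ (α - n) * k x)
        ≤ C₂ * ENNReal.ofReal (dist x y ^ (α - n)) := by
    rw [← ENNReal.ofReal_mul (hW₀ x), ← ENNReal.ofReal_coe_nnreal,
      ← ENNReal.ofReal_mul C₂.coe_nonneg, mul_left_comm, mul_comm (C₂ : ℝ)]
    gcongr
    exact hWk x hx
  refine setLIntegral_le_mul_measure_rpow (y := y) hnq hE hWE (fun R => ?_) fun R hR x hx => ?_
  · have hER : MeasurableSet (E ∩ ball y R) := hE.inter measurableSet_ball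
    calc _ = ∫⁻ x in E ∩ ball y R,
            ENNReal.ofReal (W x) * ENNReal.ofReal (dist x y ^ (α - n) * k x) ∂μ :=
          setLIntegral_withDensity_eq_setLIntegral_mul μ hW.ennreal_ofReal (by fun_prop) hER
      _ ≤ ∫⁻ x in E ∩ ball y R, C₂ * ENNReal.ofReal (dist x y ^ (α - n)) ∂μ :=
          setLIntegral_mono' hER fun x hx => hpoint hx.1
      _ ≤ ∫⁻ x in ball y R, C₂ * ENNReal.ofReal (dist x y ^ (α - n)) ∂μ :=
          lintegral_mono_set inter_subset_right
      _ ≤ C₂ * B * (R : ℝ≥0∞) ^ α := by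
          rw [lintegral_const_mul' _ _ ENNReal.coe_ne_top, mul_assoc]
          gcongr
          exact hμ y R
  · have hRx : R ≤ dist x y := not_lt.1 hx.2
    exact ofReal_rpow_mul_le hαn hR hRx (hkdist x hx.1 ((NNReal.coe_pos.2 hR).trans_le hRx))

theorem setLIntegral_superlevel_le [SecondCountableTopology X] [SFinite μ] (hαn : α < n + q)
    (hnq : 0 < n + q)
    (hμ : ∀ (y : X) (R : ℝ≥0),
      ∫⁻ x in ball y R, ENNReal.ofReal (dist x y ^ (α - n)) ∂μ ≤ B * (R : ℝ≥0∞) ^ α)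
    (hW : Measurable W) (hW₀ : ∀ x, 0 ≤ W x) {f : X → X → ℝ}
    (hf : Measurable (Function.uncurry f)) {S : Set X} (hS : MeasurableSet S)
    (hWS : ∫⁻ x in S, ENNReal.ofReal (W x) ∂μ ≠ ∞)
    (hfdist : ∀ x ∈ S, ∀ y ∈ S, 0 < dist x y → f x y ≤ C₁ * dist x y ^ (-q))
    (hWf : ∀ x ∈ S, ∀ y ∈ S, W x * f x y ≤ C₂) (ω : Measure X) [SFinite ω] {t : ℝ} (ht : 0 < t) :
    ∫⁻ x in {x | x ∈ S ∧ ENNReal.ofReal t <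
        ∫⁻ y in S, ENNReal.ofReal (dist x y ^ (α - n) * f x y) ∂ω}, ENNReal.ofReal (W x) ∂μ
      ≤ ((C₂ * B + C₁) * ω S / ENNReal.ofReal t) ^ (1 - α / (n + q))⁻¹ := by
  set K : X → X → ℝ≥0∞ := fun x y => ENNReal.ofReal (dist x y ^ (α - n) * f x y)
  set ν := μ.withDensity fun x => ENNReal.ofReal (W x)
  have hK : Measurable (Function.uncurry K) :=
    (((measurable_dist (α := X)).pow_const (α - n)).mul hf).ennreal_ofReal
  have hνS : ν S ≠ ∞ := by rwa [withDensity_apply _ hS]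
  have hKE (E : Set X) (hES : E ⊆ S) (hE : MeasurableSet E) : ∀ᵐ y ∂ω.restrict S,
      ∫⁻ x in E, K x y ∂ν ≤ (C₂ * B + C₁) * ν E ^ (α / (n + q)) :=
    ae_restrict_of_forall_mem hS fun y hy =>
      setLIntegral_withDensity_dist_rpow_mul_le hαn.le hnq hμ hW hW₀
        (hf.comp measurable_prodMk_right) hE (measure_ne_top_of_subset hES hνS)
        (fun x hx => hfdist x (hES hx) y hy) fun x hx => hWf x (hES hx) y hy
  calc _ = ν {x | x ∈ S ∧ ENNReal.ofReal t < ∫⁻ y in S, K x y ∂ω} :=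
        (withDensity_apply _ <|
          hS.inter (measurableSet_lt measurable_const hK.lintegral_prod_right)).symm
    _ ≤ ((C₂ * B + C₁) * ω.restrict S univ / ENNReal.ofReal t) ^ (1 - α / (n + q))⁻¹ :=
        measure_superlevel_lintegral_le hK hS hνS (ENNReal.ofReal_pos.2 ht).ne'
          ENNReal.ofReal_ne_top ((div_lt_one hnq).2 hαn) hKE
    _ = _ := by rw [Measure.restrict_apply_univ]

end Superlevel

theorem coe_mul_div_ofReal_rpow (M : ℝ≥0) (w : ℝ≥0∞) {t p : ℝ} (ht : 0 < t) (hp : 0 ≤ p) :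
    (M * w / ENNReal.ofReal t) ^ p = ENNReal.ofReal (M ^ p * t ^ (-p)) * w ^ p := by
  rw [ENNReal.div_rpow_of_nonneg _ _ hp, ENNReal.mul_rpow_of_nonneg _ _ hp,
    ENNReal.ofReal_mul (by positivity), ← ENNReal.ofReal_rpow_of_nonneg M.coe_nonneg hp,
    ENNReal.ofReal_coe_nnreal, ← ENNReal.ofReal_rpow_of_pos ht, ENNReal.rpow_neg, div_eq_mul_inv,
    mul_right_comm]

theorem antitoneOn_div_sub {c : ℝ} (hc : 0 ≤ c) : AntitoneOn (fun x => x / (x - c)) (Ioi c) := by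
  intro x (hx : c < x) y (hy : c < y) hxy
  rw [div_le_div_iff₀ (sub_pos.2 hy) (sub_pos.2 hx)]
  nlinarith

theorem min_add_div_sub_eq {n κ γ c : ℝ} (hc : 0 ≤ c) (hκ : c < n + κ) (hγ : c < n + γ) :
    min ((n + κ) / (n + κ - c)) ((n + γ) / (n + γ - c))
      = (n + max κ γ) / (n + max κ γ - c) := by
  rw [← max_add_add_left]
  exact ((antitoneOn_div_sub hc).map_max hκ hγ).symm

theorem nonempty_frontier_of_isBounded {E : Type*} [NormedAddCommGroup E] [NormedSpace ℝ E]
    [Nontrivial E] {Ω : Set E} (hΩ : Bornology.IsBounded Ω) (hne : Ω.Nonempty) :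
    (frontier Ω).Nonempty :=
  nonempty_frontier_iff.2 ⟨hne, fun h => NormedSpace.unbounded_univ ℝ E (h ▸ hΩ)⟩

theorem exists_pos_le_infDist_add_infDist {X : Type*} [PseudoMetricSpace X] {F Z : Set X}
    (hF : IsClosed F) (hFne : F.Nonempty) (hZ : IsCompact Z) (hZne : Z.Nonempty)
    (hd : Disjoint F Z) : ∃ c : ℝ, 0 < c ∧ ∀ y, c ≤ infDist y F + infDist y Z := by
  obtain ⟨z₀, hz₀, hmin⟩ := hZ.exists_isMinOn hZne (continuous_infDist_pt F).continuousOn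
  refine ⟨infDist z₀ F, (hF.notMem_iff_infDist_pos hFne).1 (hd.notMem_of_mem_right hz₀),
    fun y => ?_⟩
  obtain ⟨z, hz, hyz⟩ := hZ.exists_infDist_eq_dist hZne y
  calc infDist z₀ F ≤ infDist z F := hmin hz
    _ ≤ infDist y F + dist z y := infDist_le_infDist_add_dist
    _ = infDist y F + infDist y Z := by rw [hyz, dist_comm]

theorem exists_pos_forall_le_of_lipschitzWith {X : Type*} [PseudoMetricSpace X] {δ : X → ℝ}
    (hδ : LipschitzWith 1 δ) {S : Set X} (hS : Bornology.IsBounded S) :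
    ∃ L : ℝ, 0 < L ∧ ∀ x ∈ S, δ x ≤ L := by
  obtain ⟨L, hL⟩ := (hδ.isBounded_image hS).bddAbove
  exact ⟨max L 1, by positivity, fun x hx => (hL (mem_image_of_mem δ hx)).trans (le_max_left _ _)⟩

theorem exists_setLIntegral_superlevel_singularFactor_le {X : Type*} [PseudoMetricSpace X]
    [SecondCountableTopology X] [MeasurableSpace X] [OpensMeasurableSpace X] {μ : Measure X}
    [SFinite μ] {α n q e₁ b₁ e₂ b₂ c : ℝ} {B : ℝ≥0} (hα : 0 ≤ α) (hαn : α < n + q)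
    (hμ : ∀ (y : X) (R : ℝ≥0),
      ∫⁻ x in ball y R, ENNReal.ofReal (dist x y ^ (α - n)) ∂μ ≤ B * (R : ℝ≥0∞) ^ α)
    {δ ρ : X → ℝ} (hδ₀ : ∀ x, 0 ≤ δ x) (hδ : LipschitzWith 1 δ) (hρ₀ : ∀ x, 0 ≤ ρ x)
    (hρ : LipschitzWith 1 ρ) (hb₁ : 0 ≤ b₁) (hbe₁ : b₁ ≤ e₁) (hb₂ : 0 ≤ b₂) (hbe₂ : b₂ ≤ e₂)
    (hbq₁ : b₁ ≤ q) (hbq₂ : b₂ ≤ q) {S : Set X} (hS : MeasurableSet S)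
    (hSb : Bornology.IsBounded S) (hμS : μ S ≠ ∞) (hc : 0 < c) (hcS : ∀ y ∈ S, c ≤ δ y + ρ y) :
    ∃ C : ℝ, 0 < C ∧ ∀ (ω : Measure X) [SFinite ω] (t : ℝ), 0 < t →
      ∫⁻ x in {x | x ∈ S ∧ ENNReal.ofReal t < ∫⁻ y in S, ENNReal.ofReal (dist x y ^ (α - n) *
          (singularFactor δ e₁ b₁ x y * singularFactor ρ e₂ b₂ x y)) ∂ω},
          ENNReal.ofReal (δ x ^ e₁ * ρ x ^ e₂) ∂μ
        ≤ ENNReal.ofReal (C * t ^ (-((n + q) / (n + q - α)))) * ω S ^ ((n + q) / (n + q - α)) := by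
  obtain ⟨C₁, hC₁, hfdist⟩ := exists_singularFactor_mul_le (q := q) hδ₀ hδ hρ₀ hρ hb₁ hbe₁ hb₂ hbe₂
    hbq₁ hbq₂ hSb hc hcS
  obtain ⟨L₁, hL₁, hδL⟩ := exists_pos_forall_le_of_lipschitzWith hδ hSb
  obtain ⟨L₂, hL₂, hρL⟩ := exists_pos_forall_le_of_lipschitzWith hρ hSb
  let C₂ := L₁ ^ e₁ * (4 / L₁) ^ b₁ * (L₂ ^ e₂ * (4 / L₂) ^ b₂)
  lift C₁ to ℝ≥0 using hC₁.le
  have hM : 0 < C₂.toNNReal * B + C₁ := add_pos_of_nonneg_of_pos zero_le (NNReal.coe_pos.1 hC₁)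
  have hW₀ (x : X) : 0 ≤ δ x ^ e₁ * ρ x ^ e₂ :=
    mul_nonneg (Real.rpow_nonneg (hδ₀ x) _) (Real.rpow_nonneg (hρ₀ x) _)
  have hW : Measurable fun x => δ x ^ e₁ * ρ x ^ e₂ :=
    (hδ.continuous.measurable.pow_const _).mul (hρ.continuous.measurable.pow_const _)
  have hWS : ∫⁻ x in S, ENNReal.ofReal (δ x ^ e₁ * ρ x ^ e₂) ∂μ ≠ ∞ := by
    refine (setLIntegral_lt_top_of_le_nnreal hμS
      ⟨(L₁ ^ e₁ * L₂ ^ e₂).toNNReal, fun x hx => ENNReal.ofReal_le_ofReal ?_⟩).ne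
    have := hδ₀ x
    have := hρ₀ x
    gcongr
    exacts [hb₁.trans hbe₁, hδL x hx, hb₂.trans hbe₂, hρL x hx]
  have hp : (1 - α / (n + q))⁻¹ = (n + q) / (n + q - α) := by
    rw [one_sub_div (hα.trans_lt hαn).ne', inv_div]
  have hf : Measurable (Function.uncurry fun x y =>
      singularFactor δ e₁ b₁ x y * singularFactor ρ e₂ b₂ x y) :=
    (measurable_uncurry_singularFactor hδ.continuous.measurable).mul
      (measurable_uncurry_singularFactor hρ.continuous.measurable)
  refine ⟨(C₂.toNNReal * B + C₁ : ℝ≥0) ^ ((n + q) / (n + q - α)), by positivity, fun ω _ t ht => ?_⟩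
  rw [← coe_mul_div_ofReal_rpow _ _ ht (div_nonneg (hα.trans hαn.le) (by linarith)), ← hp]
  exact_mod_cast setLIntegral_superlevel_le hαn (hα.trans_lt hαn) hμ hW hW₀ hf hS hWS hfdist
    (fun x hx y _ => (rpow_mul_rpow_mul_singularFactor_mul_le hδ₀ hδ hρ₀ hρ hb₁ hbe₁ hb₂ hbe₂
      hL₁ hL₂ (hδL x hx) (hρL x hx) y).trans (Real.le_coe_toNNReal _)) ω ht

theorem weak_estimate_green_nonpositive_general {E : Type*} [NormedAddCommGroup E]
    [NormedSpace ℝ E] [FiniteDimensional ℝ E] [MeasurableSpace E] [BorelSpace E] (μ : Measure E)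
    [μ.IsAddHaarMeasure] {N : ℕ} (hN : 2 < N) (hE : Module.finrank ℝ E = N) {Ω Z : Set E}
    (hΩo : IsOpen Ω) (hΩb : Bornology.IsBounded Ω) (hZ : IsCompact Z) (hZne : Z.Nonempty)
    (hZΩ : Z ⊆ Ω) {a κ γ : ℝ} (hκ0 : 0 ≤ κ) (hκa : κ ≤ a) (hγ0 : 0 ≤ γ) (hγ1 : γ ≤ 1) :
    ∃ C : ℝ, 0 < C ∧ ∀ (ω : Measure E) [SFinite ω] (t : ℝ), 0 < t →
      (∫⁻ x in {x | x ∈ Ω \ Z ∧ ENNReal.ofReal t <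
          ∫⁻ y in Ω \ Z, ENNReal.ofReal
            (dist x y ^ (2 - (N : ℝ)) *
              min 1 (infDist x (frontier Ω) * infDist y (frontier Ω) / dist x y ^ 2) *
              (min 1 (infDist x Z * infDist y Z / dist x y ^ 2)) ^ a *
              (infDist y Z ^ (-κ) * infDist y (frontier Ω) ^ (-γ))) ∂ω},
        ENNReal.ofReal (infDist x (frontier Ω) * infDist x Z ^ a) ∂μ)
      ≤ ENNReal.ofReal (C * t ^ (-(min (((N : ℝ) + κ) / ((N : ℝ) + κ - 2))
            (((N : ℝ) + γ) / ((N : ℝ) + γ - 2))))) *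
          (ω (Ω \ Z)) ^ (min (((N : ℝ) + κ) / ((N : ℝ) + κ - 2))
            (((N : ℝ) + γ) / ((N : ℝ) + γ - 2))) := by
  have hN' : (2 : ℝ) < N := by exact_mod_cast hN
  have hdim : 0 < Module.finrank ℝ E := by lia
  have : Nontrivial E := Module.nontrivial_of_finrank_pos hdim
  have hSb : Bornology.IsBounded (Ω \ Z) := hΩb.subset sdiff_subset
  obtain ⟨B, hB⟩ := exists_setLIntegral_ball_dist_rpow_le μ two_pos hdim
  rw [hE] at hB
  obtain ⟨c, hc, hcS⟩ := exists_pos_le_infDist_add_infDist isClosed_frontier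
    (nonempty_frontier_of_isBounded hΩb (hZne.mono hZΩ)) hZ hZne
    ((disjoint_frontier_iff_isOpen.2 hΩo).mono_right hZΩ)
  obtain ⟨C, hC, hbound⟩ := exists_setLIntegral_superlevel_singularFactor_le (q := max κ γ)
    zero_le_two (hN'.trans_le (le_add_of_nonneg_right (hκ0.trans (le_max_left κ γ)))) hB
    (fun _ => infDist_nonneg) (lipschitz_infDist_pt (frontier Ω)) (fun _ => infDist_nonneg)
    (lipschitz_infDist_pt Z) hγ0 hγ1 hκ0 hκa (le_max_right κ γ) (le_max_left κ γ)
    (hΩo.measurableSet.diff hZ.isClosed.measurableSet) hSb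
    hSb.measure_lt_top.ne hc fun y _ => hcS y
  have hregroup (r u v p s : ℝ) : r * u * v * (p * s) = r * (u * s * (v * p)) := by ring
  refine ⟨C, hC, fun ω _ t ht => ?_⟩
  rw [min_add_div_sub_eq zero_le_two (by linarith) (by linarith)]
  simpa only [singularFactor, Real.rpow_one, hregroup] using hbound ω t ht

/-- Weak Lebesgue estimate for the Green-type potential of `Δ + μ|x|^{−2}` with
`μ ≤ 0` (so `a = √(((N−2)/2)² − μ) − (N−2)/2 ≥ 0`) against the measure
`|y|^{−κ} d(y)^{−γ} dω(y)`, with respect to the weight `d(x)|x|^{a}` and exponent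
`p = min{(N+κ)/(N+κ−2), (N+γ)/(N+γ−2)}`. -/
theorem weak_estimate_green_nonpositive (N : ℕ) (hN : 2 < N)
    (Ω : Set (EuclideanSpace ℝ (Fin N)))
    (hΩo : IsOpen Ω) (hΩb : Bornology.IsBounded Ω) (h0 : (0 : EuclideanSpace ℝ (Fin N)) ∈ Ω)
    (a κ γ : ℝ) (ha : 0 ≤ a) (hκ0 : 0 ≤ κ) (hκa : κ ≤ a) (hγ0 : 0 ≤ γ) (hγ1 : γ ≤ 1) :
    ∃ C : ℝ, 0 < C ∧ ∀ (ω : Measure (EuclideanSpace ℝ (Fin N))), IsFiniteMeasure ω →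
      ∀ t : ℝ, 0 < t →
      (∫⁻ x in {x | x ∈ Ω \ {0} ∧ ENNReal.ofReal t <
          ∫⁻ y in Ω \ {0}, ENNReal.ofReal
            (dist x y ^ (2 - (N : ℝ)) *
              min 1 (infDist x (frontier Ω) * infDist y (frontier Ω) / dist x y ^ 2) *
              (min 1 (‖x‖ * ‖y‖ / dist x y ^ 2)) ^ a *
              (‖y‖ ^ (-κ) * infDist y (frontier Ω) ^ (-γ))) ∂ω},
        ENNReal.ofReal (infDist x (frontier Ω) * ‖x‖ ^ a))
      ≤ ENNReal.ofReal (C * t ^ (-(min (((N : ℝ) + κ) / ((N : ℝ) + κ - 2))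
            (((N : ℝ) + γ) / ((N : ℝ) + γ - 2))))) *
          (ω (Ω \ {0})) ^ (min (((N : ℝ) + κ) / ((N : ℝ) + κ - 2))
            (((N : ℝ) + γ) / ((N : ℝ) + γ - 2))) := by
  obtain ⟨C, hC, hbound⟩ := weak_estimate_green_nonpositive_general volume hN
    finrank_euclideanSpace_fin hΩo hΩb isCompact_singleton (singleton_nonempty 0)
    (singleton_subset_iff.2 h0) hκ0 hκa hγ0 hγ1
  simp only [infDist_singleton, dist_zero_right] at hbound
  exact ⟨C, hC, fun ω _ => hbound ω⟩
end

section
/- Let N ≥ 1 be an integer and θ > −N a real number. Then there exist constants c = c(N, θ) > 0 and C = C(N, θ) > 0 such that for every x ∈ ℝ^N and every s > 0: c · max{|x|, s}^θ · s^N ≤ ∫_{B(x,s)} |y|^θ dy ≤ C · max{|x|, s}^θ · s^N, where B(x,s) is the open Euclidean ball of center x and radius s. -/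
open MeasureTheory Metric Set

/-!
Far from the origin (`2 * s ≤ ‖x‖`) the weight `‖y‖ ^ θ` is comparable to `‖x‖ ^ θ` on all of
`ball x s`. Near the origin (`‖x‖ ≤ 2 * s`) the ball sits inside `ball 0 (3 * s)`, where the
integral scales like `s ^ θ` times the volume and is finite because `θ` exceeds minus the dimension.
For the lower bound, pushing the centre outwards by `s / 2` along its own direction gives a ball of
radius `s / 4` inside `ball x s` on which `‖y‖` is comparable to `max ‖x‖ s`, wherever `x` is.
-/

open Module

theorem rpow_le_rpow_abs_mul_rpow {a b c : ℝ} (ha : 0 < a) (hb : 0 < b) (hab : a ≤ c * b)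
    (hba : b ≤ c * a) (θ : ℝ) : a ^ θ ≤ c ^ |θ| * b ^ θ := by
  have hc : 0 < c := pos_of_mul_pos_left (ha.trans_le hab) hb.le
  rcases le_total 0 θ with hθ | hθ
  · calc a ^ θ ≤ (c * b) ^ θ := Real.rpow_le_rpow ha.le hab hθ
      _ = c ^ |θ| * b ^ θ := by rw [Real.mul_rpow hc.le hb.le, abs_of_nonneg hθ]
  · calc a ^ θ ≤ (b / c) ^ θ :=
          Real.rpow_le_rpow_of_nonpos (div_pos hb hc) ((div_le_iff₀' hc).2 hba) hθ
      _ = c ^ |θ| * b ^ θ := by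
          rw [Real.div_rpow hb.le hc.le, abs_of_nonpos hθ, Real.rpow_neg hc.le, div_eq_inv_mul]

section Norm

variable {E : Type*} [NormedAddCommGroup E] [NormedSpace ℝ E] [Nontrivial E]

theorem exists_norm_eq_one_and_eq_norm_smul (x : E) : ∃ u : E, ‖u‖ = 1 ∧ x = ‖x‖ • u := by
  rcases eq_or_ne x 0 with rfl | hx
  · obtain ⟨u, hu⟩ := exists_norm_eq E zero_le_one
    exact ⟨u, hu, by rw [norm_zero, zero_smul]⟩
  · exact ⟨‖x‖⁻¹ • x, norm_smul_inv_norm hx, (smul_inv_smul₀ (norm_ne_zero_iff.2 hx) x).symm⟩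

theorem exists_dist_eq_and_norm_eq_norm_add (x : E) {r : ℝ} (hr : 0 ≤ r) :
    ∃ z : E, dist z x = r ∧ ‖z‖ = ‖x‖ + r := by
  obtain ⟨u, hu, hx⟩ := exists_norm_eq_one_and_eq_norm_smul x
  refine ⟨x + r • u, ?_, ?_⟩
  · rw [dist_self_add_left, norm_smul, hu, mul_one, Real.norm_of_nonneg hr]
  · calc ‖x + r • u‖ = ‖(‖x‖ + r) • u‖ := by rw [add_smul, ← hx]
      _ = ‖x‖ + r := by rw [norm_smul, hu, mul_one, Real.norm_of_nonneg (by positivity)]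

theorem exists_ball_subset_ball_norm_mem_Icc (x : E) {s : ℝ} (hs : 0 < s) :
    ∃ z : E, ball z (s / 4) ⊆ ball x s ∧
      ∀ y ∈ ball z (s / 4), ‖y‖ ∈ Icc (max ‖x‖ s / 4) (2 * max ‖x‖ s) := by
  obtain ⟨z, hzx, hz⟩ := exists_dist_eq_and_norm_eq_norm_add x (half_pos hs).le
  refine ⟨z, ball_subset_ball' (by linarith), fun y hy => ?_⟩
  have hyz : |‖y‖ - ‖z‖| < s / 4 := (abs_norm_sub_norm_le y z).trans_lt (mem_ball_iff_norm.1 hy)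
  obtain ⟨hlow, hupp⟩ := abs_lt.1 hyz
  have hx := norm_nonneg x
  have hmax : max ‖x‖ s ≤ ‖x‖ + s := max_le (by linarith) (by linarith)
  constructor <;> linarith [le_max_left ‖x‖ s, le_max_right ‖x‖ s]

end Norm

section Haar

variable {E : Type*} [NormedAddCommGroup E] [NormedSpace ℝ E] [FiniteDimensional ℝ E]
  [MeasurableSpace E] [BorelSpace E] (μ : Measure E) [μ.IsAddHaarMeasure]

theorem setLIntegral_ball_const (a : ℝ) (x : E) {r : ℝ} (hr : 0 < r) :
    ∫⁻ _ in ball x r, ENNReal.ofReal a ∂μ =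
      ENNReal.ofReal (a * (r ^ finrank ℝ E * μ.real (ball 0 1))) := by
  rw [setLIntegral_const, μ.addHaar_ball_of_pos x hr, ENNReal.ofReal_mul' (by positivity),
    ENNReal.ofReal_mul (by positivity), ofReal_measureReal]

theorem setIntegral_ball_zero_norm_rpow (θ : ℝ) {r : ℝ} (hr : 0 < r) :
    ∫ y in ball (0 : E) r, ‖y‖ ^ θ ∂μ =
      r ^ θ * r ^ finrank ℝ E * ∫ y in ball (0 : E) 1, ‖y‖ ^ θ ∂μ := by
  have hscale := Measure.setIntegral_comp_smul_of_pos μ (fun y : E => ‖y‖ ^ θ) (ball 0 1) hr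
  simp only [norm_smul, Real.norm_of_nonneg hr.le, Real.mul_rpow hr.le (norm_nonneg _),
    integral_const_mul, smul_unitBall_of_pos hr, smul_eq_mul] at hscale
  rw [mul_right_comm, hscale]
  field_simp

theorem integrableOn_ball_zero_norm_rpow [Nontrivial E] {θ : ℝ} (hθ : -(finrank ℝ E : ℝ) < θ)
    (r : ℝ) : IntegrableOn (fun y : E => ‖y‖ ^ θ) (ball 0 r) μ := by
  refine integrableOn_ball_of_norm_le_rpow (C := 1) (α := -θ) finrank_pos (neg_lt.1 hθ)
    (.of_forall fun y => ?_) (Measurable.aestronglyMeasurable (by fun_prop))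
  rw [Real.norm_of_nonneg (by positivity), neg_neg, one_mul]

theorem ofReal_le_setLIntegral_ball_norm_rpow [Nontrivial E] (θ : ℝ) (x : E) {s : ℝ}
    (hs : 0 < s) :
    ENNReal.ofReal ((4 ^ |θ|)⁻¹ * (4 ^ finrank ℝ E)⁻¹ * μ.real (ball (0 : E) 1) *
        max ‖x‖ s ^ θ * s ^ finrank ℝ E) ≤
      ∫⁻ y in ball x s, ENNReal.ofReal (‖y‖ ^ θ) ∂μ := by
  obtain ⟨z, hsub, hnorm⟩ := exists_ball_subset_ball_norm_mem_Icc x hs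
  have hM : 0 < max ‖x‖ s := hs.trans_le (le_max_right _ _)
  have hweight : ∀ y ∈ ball z (s / 4), (4 ^ |θ|)⁻¹ * max ‖x‖ s ^ θ ≤ ‖y‖ ^ θ := fun y hy => by
    obtain ⟨hlow, hupp⟩ := hnorm y hy
    exact (inv_mul_le_iff₀ (by positivity)).2
      (rpow_le_rpow_abs_mul_rpow hM (by linarith) (by linarith) (by linarith) θ)
  calc
    _ = ∫⁻ _ in ball z (s / 4), ENNReal.ofReal ((4 ^ |θ|)⁻¹ * max ‖x‖ s ^ θ) ∂μ := by
      rw [setLIntegral_ball_const μ _ z (by positivity), div_pow]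
      ring_nf
    _ ≤ ∫⁻ y in ball z (s / 4), ENNReal.ofReal (‖y‖ ^ θ) ∂μ :=
      setLIntegral_mono' measurableSet_ball fun y hy => ENNReal.ofReal_le_ofReal (hweight y hy)
    _ ≤ ∫⁻ y in ball x s, ENNReal.ofReal (‖y‖ ^ θ) ∂μ := lintegral_mono_set hsub

theorem setLIntegral_ball_norm_rpow_le_of_two_mul_le_norm (θ : ℝ) {x : E} {s : ℝ} (hs : 0 < s)
    (hx : 2 * s ≤ ‖x‖) :
    ∫⁻ y in ball x s, ENNReal.ofReal (‖y‖ ^ θ) ∂μ ≤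
      ENNReal.ofReal (2 ^ |θ| * μ.real (ball (0 : E) 1) * ‖x‖ ^ θ * s ^ finrank ℝ E) := by
  have hweight : ∀ y ∈ ball x s, ‖y‖ ^ θ ≤ 2 ^ |θ| * ‖x‖ ^ θ := fun y hy => by
    have hyx : |‖y‖ - ‖x‖| < s := (abs_norm_sub_norm_le y x).trans_lt (mem_ball_iff_norm.1 hy)
    obtain ⟨hlow, hupp⟩ := abs_lt.1 hyx
    exact rpow_le_rpow_abs_mul_rpow (by linarith) (by linarith) (by linarith) (by linarith) θ
  calc
    _ ≤ ∫⁻ _ in ball x s, ENNReal.ofReal (2 ^ |θ| * ‖x‖ ^ θ) ∂μ :=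
      setLIntegral_mono' measurableSet_ball fun y hy => ENNReal.ofReal_le_ofReal (hweight y hy)
    _ = _ := by
      rw [setLIntegral_ball_const μ _ x hs]
      ring_nf

theorem setLIntegral_ball_norm_rpow_le_of_norm_le_two_mul [Nontrivial E] {θ : ℝ}
    (hθ : -(finrank ℝ E : ℝ) < θ) {x : E} {s : ℝ} (hs : 0 < s) (hx : ‖x‖ ≤ 2 * s) :
    ∫⁻ y in ball x s, ENNReal.ofReal (‖y‖ ^ θ) ∂μ ≤
      ENNReal.ofReal (3 ^ |θ| * 3 ^ finrank ℝ E * (∫ y in ball (0 : E) 1, ‖y‖ ^ θ ∂μ) *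
        max ‖x‖ s ^ θ * s ^ finrank ℝ E) := by
  have hsub : ball x s ⊆ ball 0 (3 * s) := ball_subset_ball' (by rw [dist_zero_right]; linarith)
  have hsM : s ≤ max ‖x‖ s := le_max_right _ _
  have hMs : max ‖x‖ s ≤ 2 * s := max_le hx (by linarith)
  have hradius : (3 * s) ^ θ ≤ 3 ^ |θ| * max ‖x‖ s ^ θ :=
    rpow_le_rpow_abs_mul_rpow (by positivity) (by positivity) (by linarith) (by linarith) θ
  calc
    _ ≤ ∫⁻ y in ball 0 (3 * s), ENNReal.ofReal (‖y‖ ^ θ) ∂μ := lintegral_mono_set hsub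
    _ = ENNReal.ofReal (∫ y in ball 0 (3 * s), ‖y‖ ^ θ ∂μ) :=
      (ofReal_integral_eq_lintegral_ofReal (integrableOn_ball_zero_norm_rpow μ hθ _)
        (.of_forall fun y => by positivity)).symm
    _ = ENNReal.ofReal ((3 * s) ^ θ * (3 * s) ^ finrank ℝ E *
          ∫ y in ball (0 : E) 1, ‖y‖ ^ θ ∂μ) := by
      rw [setIntegral_ball_zero_norm_rpow μ θ (by positivity)]
    _ ≤ ENNReal.ofReal (3 ^ |θ| * max ‖x‖ s ^ θ * (3 * s) ^ finrank ℝ E *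
          ∫ y in ball (0 : E) 1, ‖y‖ ^ θ ∂μ) := by
      gcongr
    _ = _ := by
      rw [mul_pow]
      ring_nf

theorem ball_integral_norm_rpow_general [Nontrivial E] {θ : ℝ} (hθ : -(finrank ℝ E : ℝ) < θ) :
    ∃ c C : ℝ, 0 < c ∧ 0 < C ∧ ∀ (x : E) (s : ℝ), 0 < s →
      ENNReal.ofReal (c * max ‖x‖ s ^ θ * s ^ finrank ℝ E) ≤
          (∫⁻ y in ball x s, ENNReal.ofReal (‖y‖ ^ θ) ∂μ) ∧
        (∫⁻ y in ball x s, ENNReal.ofReal (‖y‖ ^ θ) ∂μ) ≤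
          ENNReal.ofReal (C * max ‖x‖ s ^ θ * s ^ finrank ℝ E) := by
  have hV : 0 < μ.real (ball (0 : E) 1) :=
    ENNReal.toReal_pos (measure_ball_pos μ 0 one_pos).ne' measure_ball_lt_top.ne
  set Cfar := 2 ^ |θ| * μ.real (ball (0 : E) 1)
  set Cnear := 3 ^ |θ| * 3 ^ finrank ℝ E * ∫ y in ball (0 : E) 1, ‖y‖ ^ θ ∂μ
  refine ⟨(4 ^ |θ|)⁻¹ * (4 ^ finrank ℝ E)⁻¹ * μ.real (ball (0 : E) 1), max Cfar Cnear,
    by positivity, lt_max_of_lt_left (by positivity), fun x s hs =>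
      ⟨ofReal_le_setLIntegral_ball_norm_rpow μ θ x hs, ?_⟩⟩
  rcases le_total (2 * s) ‖x‖ with hx | hx
  · have hmax : max ‖x‖ s = ‖x‖ := max_eq_left (by linarith)
    rw [hmax]
    refine (setLIntegral_ball_norm_rpow_le_of_two_mul_le_norm μ θ hs hx).trans ?_
    gcongr
    exact le_max_left _ _
  · refine (setLIntegral_ball_norm_rpow_le_of_norm_le_two_mul μ hθ hs hx).trans ?_
    gcongr
    exact le_max_right _ _

end Haar

/-- Two-sided estimate `∫_{B(x,s)} |y|^θ dy ≈ max{|x|,s}^θ s^N` for `θ > −N`. -/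
theorem ball_integral_norm_rpow (N : ℕ) (hN : 1 ≤ N) (θ : ℝ) (hθ : -(N : ℝ) < θ) :
    ∃ c C : ℝ, 0 < c ∧ 0 < C ∧ ∀ (x : EuclideanSpace ℝ (Fin N)) (s : ℝ), 0 < s →
      ENNReal.ofReal (c * max ‖x‖ s ^ θ * s ^ (N : ℝ)) ≤
          (∫⁻ y in Metric.ball x s, ENNReal.ofReal (‖y‖ ^ θ)) ∧
        (∫⁻ y in Metric.ball x s, ENNReal.ofReal (‖y‖ ^ θ)) ≤
          ENNReal.ofReal (C * max ‖x‖ s ^ θ * s ^ (N : ℝ)) := by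
  have : NeZero N := ⟨Nat.one_le_iff_ne_zero.1 hN⟩
  simpa only [finrank_euclideanSpace_fin, Real.rpow_natCast] using
    ball_integral_norm_rpow_general (volume : Measure (EuclideanSpace ℝ (Fin N))) (θ := θ)
      (by rwa [finrank_euclideanSpace_fin])
end
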